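/- Let a be an irrational algebraic number of degree ≥ 2 with continued fraction convergents p_n/q_n and partial quotients b_n. Then for every ε > 0, b_{n+1} ≤ C_ε · q_n^ε for some constant C_ε > 0 and all n. -/

import Mathlib

/-!
A partial quotient `b (n + 1)` that is large compared with `q n` makes `p n / q n` approximate `a`
too well for Roth's theorem, so everything rests on the latter. Its proof is by contradiction, from
`m` very good rational approximations `x₁, …, x_m` of an algebraic integer `α` with rapidly growing
denominators, and degrees `r_j` that make the numbers `den(x_j) ^ r_j` roughly equal.

Siegel's lemma provides a nonzero integral polynomial of degree at most `r_j` in `X_j`, with small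
coefficients, all of whose Hasse derivatives of weight `∑ i_j / r_j < m (1/2 - δ)` vanish at
`(α, …, α)`: by Chernoff's bound these conditions are few compared with the number of coefficients.
On the other hand, by Roth's lemma some Hasse derivative of small weight does not vanish at
`(x₁, …, x_m)`. Its value there is a nonzero rational number with denominator dividing
`∏ den(x_j) ^ r_j`, while Taylor expansion at `(α, …, α)` shows that it is much smaller than the
inverse of this product as soon as the exponent of approximation exceeds `2`.

Roth's lemma is proved by induction on `m`. A generalized Wronskian of the polynomial splits as a
polynomial in the first variable times a polynomial in the others. The index of the first factor is
bounded by Gauss's lemma and that of the second by induction, whereas a large index of the original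
polynomial would force a large index of the Wronskian.
-/

section OneVariable

open Polynomial

theorem den_pow_dvd_leadingCoeff {x : ℚ} {G : ℤ[X]} {k : ℕ}
    (h : (X - C x) ^ k ∣ G.map (Int.castRingHom ℚ)) : (x.den : ℤ) ^ k ∣ G.leadingCoeff := by
  let l : ℤ[X] := C (x.den : ℤ) * X + C (-x.num)
  have primitive_pow (k : ℕ) : (l ^ k).IsPrimitive := by
    induction k with
    | zero => exact pow_zero l ▸ isPrimitive_one
    | succ k ih =>
      refine pow_succ l k ▸ ih.mul fun c hc => ?_
      rw [C_dvd_iff_dvd_coeff] at hc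
      have h0 : c ∣ x.num := by simpa [l] using hc 0
      have h1 : c ∣ x.den := by
        simpa only [l, coeff_add, coeff_C_mul, coeff_X_one, coeff_C_succ, mul_one, add_zero]
          using hc 1
      exact (Rat.isCoprime_num_den x).isUnit_of_dvd' h0 h1
  have map_l : l.map (Int.castRingHom ℚ) = C (x.den : ℚ) * (X - C x) := by
    rw [mul_sub, ← C_mul, Rat.den_mul_eq_num]
    simp [l, sub_eq_add_neg]
  have unit_den : IsUnit (C (x.den : ℚ) ^ k) :=
    (isUnit_C.2 (Nat.cast_ne_zero.2 x.den_nz).isUnit).pow k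
  have pow_dvd : l ^ k ∣ G := by
    rw [IsPrimitive.Int.dvd_iff_map_cast_dvd_map_cast _ _ (primitive_pow k), Polynomial.map_pow,
      map_l, mul_pow]
    exact unit_den.mul_left_dvd.2 h
  obtain ⟨H, rfl⟩ := pow_dvd
  rw [leadingCoeff_mul, leadingCoeff_pow, leadingCoeff_linear (mod_cast x.den_nz)]
  exact dvd_mul_right _ _

theorem exists_aeval_hasseDeriv_ne_zero_and_den_pow_le (x : ℚ) {G : ℤ[X]} (hG : G ≠ 0) :
    ∃ k, aeval x (hasseDeriv k G) ≠ 0 ∧ (x.den : ℝ) ^ k ≤ ‖G.leadingCoeff‖ := by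
  have map_ne_zero : G.map (Int.castRingHom ℚ) ≠ 0 :=
    (Polynomial.map_ne_zero_iff (RingHom.injective_int _)).2 hG
  have map_hasseDeriv (k : ℕ) :
      (hasseDeriv k G).map (Int.castRingHom ℚ) = hasseDeriv k (G.map (Int.castRingHom ℚ)) := by
    ext i
    simp [hasseDeriv_coeff]
  refine ⟨(G.map (Int.castRingHom ℚ)).rootMultiplicity x, ?_, ?_⟩
  · rw [← eval_map_algebraMap, algebraMap_int_eq, map_hasseDeriv, ← taylor_coeff,
      rootMultiplicity_eq_natTrailingDegree]
    exact trailingCoeff_nonzero_iff_nonzero.2 fun h => map_ne_zero ((taylor_eq_zero x _).1 h)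
  · have hdvd := den_pow_dvd_leadingCoeff (pow_rootMultiplicity_dvd (G.map (Int.castRingHom ℚ)) x)
    have hle := Int.le_of_dvd (abs_pos.2 (leadingCoeff_ne_zero.2 hG)) ((dvd_abs _ _).2 hdvd)
    rw [Int.norm_eq_abs]
    exact_mod_cast hle

end OneVariable

noncomputable section

open MvPolynomial

section HasseDeriv

variable {σ R S A : Type*} [CommSemiring R] [CommSemiring S] [CommSemiring A] [Algebra R A]

/-- The Taylor shift `P(X + ξ)` of a multivariate polynomial; `ξ` may have coordinates in an
algebra over the coefficient ring. It is the analogue of `Polynomial.taylor`. -/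
def mvTaylor (ξ : σ → A) : MvPolynomial σ R →ₐ[R] MvPolynomial σ A :=
  aeval fun j => X j + C (ξ j)

/-- The Hasse derivative `∂_I P = (1/I!) ∂^I P`, defined without division as the coefficient of
`Y ^ I` in `P(X + Y)`. It is the analogue of `Polynomial.hasseDeriv`. -/
def mvHasseDeriv (I : σ →₀ ℕ) : MvPolynomial σ R →ₗ[R] MvPolynomial σ R :=
  (lcoeff (MvPolynomial σ R) I).restrictScalars R ∘ₗ (mvTaylor X).toLinearMap

theorem coeff_mvTaylor (ξ : σ → A) (I : σ →₀ ℕ) (P : MvPolynomial σ R) :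
    coeff I (mvTaylor ξ P) = aeval ξ (mvHasseDeriv I P) := by
  have mvTaylor_eq : (mvTaylor ξ : MvPolynomial σ R →ₐ[R] MvPolynomial σ A) =
      (mapAlgHom (aeval ξ)).comp (mvTaylor X) := by
    ext j : 1
    simp [mvTaylor]
  rw [mvTaylor_eq, AlgHom.comp_apply, mapAlgHom_apply]
  exact coeff_map _ _ _

theorem coeff_prod_X_add_C_pow [Fintype σ] (ξ : σ → A) (I J : σ →₀ ℕ) :
    coeff I (∏ j, (X j + C (ξ j)) ^ J j) = ∏ j, ((J j).choose (I j) : A) * ξ j ^ (J j - I j) := by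
  classical
  have expand (j : σ) : (X j + C (ξ j) : MvPolynomial σ A) ^ J j =
      ∑ i ∈ Finset.range (J j + 1), C ((J j).choose i * ξ j ^ (J j - i)) * X j ^ i := by
    rw [add_pow]
    refine Finset.sum_congr rfl fun i _ => ?_
    simp only [map_mul, map_pow, map_natCast]
    ring
  have coeff_term (f : σ → ℕ) :
      coeff I (∏ j, C ((J j).choose (f j) * ξ j ^ (J j - f j)) * X j ^ f j) =
        if f = I then ∏ j, ((J j).choose (f j) : A) * ξ j ^ (J j - f j) else 0 := by
    have prod_X_pow :
        ∏ j, (X j : MvPolynomial σ A) ^ f j = monomial (Finsupp.equivFunOnFinite.symm f) 1 := by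
      rw [monomial_eq, Finsupp.prod_fintype _ _ (by simp)]
      simp
    rw [Finset.prod_mul_distrib, ← map_prod, coeff_C_mul, prod_X_pow, coeff_monomial]
    simp only [Equiv.symm_apply_eq, mul_ite, mul_one, mul_zero]
    rfl
  simp_rw [expand, Finset.prod_univ_sum, coeff_sum, coeff_term]
  rw [Finset.sum_ite_eq', ite_eq_left_iff]
  intro hI
  obtain ⟨j, hj⟩ : ∃ j, J j + 1 ≤ I j := by simpa [Fintype.mem_piFinset] using hI
  exact (Finset.prod_eq_zero (Finset.mem_univ j) (by simp [Nat.choose_eq_zero_of_lt hj])).symm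

theorem mvHasseDeriv_monomial [Fintype σ] (I J : σ →₀ ℕ) (c : R) :
    mvHasseDeriv I (monomial J c) = monomial (J - I) (c * ∏ j, ((J j).choose (I j) : R)) := by
  have taylor : (mvTaylor X (monomial J c) : MvPolynomial σ (MvPolynomial σ R)) =
      C (C c) * ∏ j, (X j + C (X j)) ^ J j := by
    rw [mvTaylor, aeval_monomial, Finsupp.prod_fintype _ _ (by simp)]
    rfl
  change coeff I (mvTaylor X (monomial J c)) = _
  rw [taylor, coeff_C_mul, coeff_prod_X_add_C_pow, Finset.prod_mul_distrib, monomial_eq,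
    Finsupp.prod_fintype _ _ (by simp)]
  simp [mul_assoc]

theorem coeff_mvHasseDeriv [Fintype σ] (I K : σ →₀ ℕ) (P : MvPolynomial σ R) :
    coeff K (mvHasseDeriv I P) = coeff (K + I) P * ∏ j, ((K j + I j).choose (I j) : R) := by
  classical
  induction P using MvPolynomial.induction_on' with
  | monomial J c =>
    rw [mvHasseDeriv_monomial, coeff_monomial, coeff_monomial]
    rcases eq_or_ne J (K + I) with rfl | hJ
    · simp
    rw [if_neg hJ, zero_mul]
    split_ifs with hK
    · obtain ⟨j, hj⟩ : ∃ j, J j < I j := by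
        by_contra! hIJ
        exact hJ (by rw [← hK, tsub_add_cancel_of_le hIJ])
      rw [Finset.prod_eq_zero (Finset.mem_univ j), mul_zero]
      rw [Nat.choose_eq_zero_of_lt hj, Nat.cast_zero]
    · rfl
  | add P Q hP hQ => rw [map_add, coeff_add, coeff_add, hP, hQ, add_mul]

theorem map_mvHasseDeriv [Finite σ] (f : R →+* S) (I : σ →₀ ℕ) (P : MvPolynomial σ R) :
    map f (mvHasseDeriv I P) = mvHasseDeriv I (map f P) := by
  cases nonempty_fintype σ
  ext K
  rw [coeff_map, coeff_mvHasseDeriv, coeff_mvHasseDeriv, coeff_map]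
  simp only [map_mul, map_prod, map_natCast]

theorem mvHasseDeriv_mvHasseDeriv [Fintype σ] (I K : σ →₀ ℕ) (P : MvPolynomial σ R) :
    mvHasseDeriv K (mvHasseDeriv I P) =
      (∏ j, (K j + I j).choose (I j)) • mvHasseDeriv (K + I) P := by
  ext M
  rw [coeff_smul]
  simp only [coeff_mvHasseDeriv, nsmul_eq_mul, Nat.cast_prod, Finsupp.add_apply, add_assoc]
  simp only [mul_assoc, mul_left_comm _ (coeff (M + (K + I)) P), ← Finset.prod_mul_distrib]
  congr 1
  refine Finset.prod_congr rfl fun j _ => ?_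
  have := Nat.choose_mul (n := M j + (K j + I j)) (Nat.le_add_left (I j) (K j))
  rw [← add_assoc (M j), Nat.add_sub_cancel, Nat.add_sub_cancel, add_assoc] at this
  rw [← Nat.cast_mul, ← Nat.cast_mul, ← this, mul_comm]

theorem degreeOf_mvHasseDeriv_le [Finite σ] (I : σ →₀ ℕ) (P : MvPolynomial σ R) (j : σ) :
    (mvHasseDeriv I P).degreeOf j ≤ P.degreeOf j := by
  cases nonempty_fintype σ
  rw [degreeOf_le_iff]
  intro K hK
  rw [mem_support_iff, coeff_mvHasseDeriv] at hK
  have : K j + I j ≤ P.degreeOf j := monomial_le_degreeOf j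
    (mem_support_iff.2 (left_ne_zero_of_mul hK))
  omega

end HasseDeriv

theorem aeval_sub_mvTaylor {σ R A : Type*} [CommSemiring R] [CommRing A] [Algebra R A]
    (ξ η : σ → A) (P : MvPolynomial σ R) :
    aeval (fun j => η j - ξ j) (mvTaylor ξ P) = aeval η P := by
  have comp_eq : ((aeval fun j => η j - ξ j : MvPolynomial σ A →ₐ[A] A).restrictScalars R).comp
      (mvTaylor ξ) = (aeval η : MvPolynomial σ R →ₐ[R] A) := by
    ext j
    simp [mvTaylor]
  exact DFunLike.congr_fun comp_eq P

theorem exists_aeval_mvHasseDeriv_ne_zero {σ R A : Type*} [CommRing R] [CommRing A] [Algebra R A]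
    [FaithfulSMul R A] (ξ : σ → A) {P : MvPolynomial σ R} (hP : P ≠ 0) :
    ∃ I, aeval ξ (mvHasseDeriv I P) ≠ 0 := by
  by_contra! h
  have mvTaylor_eq_zero : mvTaylor ξ P = 0 := by
    ext I
    rw [coeff_mvTaylor, h, coeff_zero]
  refine hP (map_injective _ (FaithfulSMul.algebraMap_injective R A) ?_)
  have comp_eq : ((mvTaylor (-ξ) : MvPolynomial σ A →ₐ[A] MvPolynomial σ A).restrictScalars R).comp
      (mvTaylor ξ) = mapAlgHom (Algebra.ofId R A) := by
    ext j
    simp [mvTaylor]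
  calc map (algebraMap R A) P = mvTaylor (-ξ) (mvTaylor ξ P) :=
        (DFunLike.congr_fun comp_eq P).symm
    _ = map (algebraMap R A) 0 := by rw [mvTaylor_eq_zero, map_zero, map_zero]

section L1Norm

variable {σ ι R A : Type*} [NormedCommRing R]

/-- The sum of the norms of the coefficients of a polynomial (its length when `R` is `ℤ`). -/
def l1Norm (P : MvPolynomial σ R) : ℝ :=
  ∑ K ∈ P.support, ‖coeff K P‖

theorem l1Norm_eq_sum {P : MvPolynomial σ R} {S : Finset (σ →₀ ℕ)} (hS : P.support ⊆ S) :
    l1Norm P = ∑ K ∈ S, ‖coeff K P‖ :=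
  Finset.sum_subset hS fun K _ hK => by rw [notMem_support_iff.1 hK, norm_zero]

theorem l1Norm_nonneg (P : MvPolynomial σ R) : 0 ≤ l1Norm P :=
  Finset.sum_nonneg fun _ _ => norm_nonneg _

theorem norm_coeff_le_l1Norm (K : σ →₀ ℕ) (P : MvPolynomial σ R) : ‖coeff K P‖ ≤ l1Norm P := by
  by_cases hK : K ∈ P.support
  · exact Finset.single_le_sum (f := fun K => ‖coeff K P‖) (fun _ _ => norm_nonneg _) hK
  · rw [notMem_support_iff.1 hK, norm_zero]
    exact l1Norm_nonneg P

theorem l1Norm_zero : l1Norm (0 : MvPolynomial σ R) = 0 := by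
  rw [l1Norm, support_zero, Finset.sum_empty]

theorem l1Norm_neg (P : MvPolynomial σ R) : l1Norm (-P) = l1Norm P := by
  simp only [l1Norm, support_neg, coeff_neg, norm_neg]

theorem l1Norm_add_le (P Q : MvPolynomial σ R) : l1Norm (P + Q) ≤ l1Norm P + l1Norm Q := by
  classical
  rw [l1Norm_eq_sum support_add, l1Norm_eq_sum (S := P.support ∪ Q.support)
    Finset.subset_union_left, l1Norm_eq_sum (S := P.support ∪ Q.support)
    Finset.subset_union_right, ← Finset.sum_add_distrib]
  exact Finset.sum_le_sum fun K _ => by rw [coeff_add]; exact norm_add_le _ _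

theorem l1Norm_sum_le (S : Finset ι) (P : ι → MvPolynomial σ R) :
    l1Norm (∑ i ∈ S, P i) ≤ ∑ i ∈ S, l1Norm (P i) :=
  Finset.le_sum_of_subadditive l1Norm l1Norm_zero.le l1Norm_add_le S P

theorem l1Norm_monomial (K : σ →₀ ℕ) (c : R) : l1Norm (monomial K c) = ‖c‖ := by
  classical
  rw [l1Norm_eq_sum support_monomial_subset, Finset.sum_singleton, coeff_monomial, if_pos rfl]

theorem l1Norm_mul_le (P Q : MvPolynomial σ R) : l1Norm (P * Q) ≤ l1Norm P * l1Norm Q := by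
  rw [mul_def]
  calc l1Norm (∑ K ∈ P.support, ∑ M ∈ Q.support, monomial (K + M) (coeff K P * coeff M Q))
      ≤ ∑ K ∈ P.support, ∑ M ∈ Q.support,
          l1Norm (monomial (K + M) (coeff K P * coeff M Q)) :=
        (l1Norm_sum_le _ _).trans (Finset.sum_le_sum fun _ _ => l1Norm_sum_le _ _)
    _ ≤ ∑ K ∈ P.support, ∑ M ∈ Q.support, ‖coeff K P‖ * ‖coeff M Q‖ := by
        simp only [l1Norm_monomial]
        gcongr
        exact norm_mul_le _ _
    _ = l1Norm P * l1Norm Q := (Finset.sum_mul_sum _ _ _ _).symm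

theorem l1Norm_map_le_of_monomial {τ : Type*} [NormedCommRing A] {F : Type*}
    [FunLike F (MvPolynomial σ R) (MvPolynomial τ A)]
    [AddMonoidHomClass F (MvPolynomial σ R) (MvPolynomial τ A)] (T : F) {B : ℝ}
    {P : MvPolynomial σ R}
    (hT : ∀ K ∈ P.support, ∀ c : R, l1Norm (T (monomial K c)) ≤ B * ‖c‖) :
    l1Norm (T P) ≤ B * l1Norm P := by
  conv_lhs => rw [P.as_sum, map_sum]
  rw [l1Norm.eq_def P, Finset.mul_sum]
  exact (l1Norm_sum_le _ _).trans (Finset.sum_le_sum fun K hK => hT K hK _)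

variable [NormOneClass R]

theorem l1Norm_one : l1Norm (1 : MvPolynomial σ R) = 1 :=
  (l1Norm_monomial 0 1).trans norm_one

theorem l1Norm_prod_le (S : Finset ι) (P : ι → MvPolynomial σ R) :
    l1Norm (∏ i ∈ S, P i) ≤ ∏ i ∈ S, l1Norm (P i) :=
  Finset.le_prod_of_submultiplicative_of_nonneg l1Norm l1Norm_nonneg l1Norm_one.le l1Norm_mul_le S P

theorem l1Norm_pow_le (P : MvPolynomial σ R) (k : ℕ) : l1Norm (P ^ k) ≤ l1Norm P ^ k := by
  simpa only [Finset.prod_const, Finset.card_range] using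
    l1Norm_prod_le (Finset.range k) fun _ => P

theorem l1Norm_det_le [Fintype ι] [DecidableEq ι] {M : Matrix ι ι (MvPolynomial σ R)} {B : ℝ}
    (hM : ∀ i j, l1Norm (M i j) ≤ B) :
    l1Norm M.det ≤ (Fintype.card ι).factorial * B ^ Fintype.card ι := by
  have l1Norm_sign_smul (e : ℤˣ) (P : MvPolynomial σ R) : l1Norm (e • P) = l1Norm P := by
    rcases Int.units_eq_one_or e with rfl | rfl
    · rw [one_smul]
    · rw [Units.neg_smul, one_smul, l1Norm_neg]
  rw [Matrix.det_apply]
  calc l1Norm (∑ e : Equiv.Perm ι, Equiv.Perm.sign e • ∏ i, M (e i) i)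
      ≤ ∑ _e : Equiv.Perm ι, ∏ _i : ι, B := by
        refine (l1Norm_sum_le _ _).trans (Finset.sum_le_sum fun e _ => ?_)
        rw [l1Norm_sign_smul]
        exact (l1Norm_prod_le _ _).trans
          (Finset.prod_le_prod (fun _ _ => l1Norm_nonneg _) fun i _ => hM (e i) i)
    _ = (Fintype.card ι).factorial * B ^ Fintype.card ι := by
        simp only [Finset.prod_const, Finset.sum_const, Finset.card_univ, Fintype.card_perm,
          nsmul_eq_mul]

theorem l1Norm_mvHasseDeriv_le [Fintype σ] {r : σ → ℕ} (I : σ →₀ ℕ) {P : MvPolynomial σ R}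
    (hr : ∀ j, P.degreeOf j ≤ r j) :
    l1Norm (mvHasseDeriv I P) ≤ 2 ^ (∑ j, r j) * l1Norm P := by
  refine l1Norm_map_le_of_monomial (mvHasseDeriv I) fun K hK c => ?_
  rw [mvHasseDeriv_monomial, l1Norm_monomial, ← Nat.cast_prod, mul_comm]
  refine (norm_mul_le _ _).trans (mul_le_mul_of_nonneg_right ?_ (norm_nonneg c))
  calc ‖((∏ j, (K j).choose (I j) : ℕ) : R)‖ ≤ (∏ j, (K j).choose (I j) : ℕ) := by
        simpa only [norm_one, mul_one] using Nat.norm_cast_le (α := R) (∏ j, (K j).choose (I j))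
    _ ≤ (∏ j, 2 ^ r j : ℕ) := by
        gcongr with j
        exact (Nat.choose_le_two_pow _ _).trans
          (Nat.pow_le_pow_right two_pos ((monomial_le_degreeOf j hK).trans (hr j)))
    _ = 2 ^ (∑ j, r j) := by rw [Finset.prod_pow_eq_pow_sum, Nat.cast_pow, Nat.cast_two]

end L1Norm

theorem l1Norm_mvTaylor_le {σ R A : Type*} [Fintype σ] [NormedCommRing R] [NormedCommRing A]
    [NormOneClass A] [Algebra R A] [NormSMulClass R A] {B : ℝ} {ξ : σ → A}
    (hξ : ∀ j, ‖ξ j‖ ≤ B) (hB : 0 ≤ B) {r : σ → ℕ} {P : MvPolynomial σ R}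
    (hr : ∀ j, P.degreeOf j ≤ r j) :
    l1Norm (mvTaylor ξ P) ≤ (1 + B) ^ (∑ j, r j) * l1Norm P := by
  refine l1Norm_map_le_of_monomial (mvTaylor ξ) fun K hK c => ?_
  have l1Norm_linear (j : σ) : l1Norm (X j + C (ξ j)) ≤ 1 + B := by
    refine (l1Norm_add_le _ _).trans (add_le_add ?_ ?_)
    · exact (l1Norm_monomial _ _).trans_le norm_one.le
    · exact (l1Norm_monomial _ _).trans_le (hξ j)
  have l1Norm_C_algebraMap : l1Norm (C (algebraMap R A c) : MvPolynomial σ A) ≤ ‖c‖ := by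
    refine (l1Norm_monomial _ _).trans_le ?_
    rw [Algebra.algebraMap_eq_smul_one, norm_smul, norm_one, mul_one]
  rw [mvTaylor, aeval_monomial, Finsupp.prod_fintype _ _ fun _ => pow_zero _, mul_comm]
  calc l1Norm ((∏ j, (X j + C (ξ j)) ^ K j) * algebraMap R (MvPolynomial σ A) c)
      ≤ (∏ j, l1Norm (X j + C (ξ j)) ^ K j) * ‖c‖ := by
        refine (l1Norm_mul_le _ _).trans (mul_le_mul ?_ l1Norm_C_algebraMap (l1Norm_nonneg _) ?_)
        · exact (l1Norm_prod_le _ _).trans (Finset.prod_le_prod (fun _ _ => l1Norm_nonneg _)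
            fun _ _ => l1Norm_pow_le _ _)
        · exact Finset.prod_nonneg fun _ _ => pow_nonneg (l1Norm_nonneg _) _
    _ ≤ (∏ j, (1 + B) ^ r j) * ‖c‖ := by
        refine mul_le_mul_of_nonneg_right (Finset.prod_le_prod
          (fun _ _ => pow_nonneg (l1Norm_nonneg _) _) fun j _ => ?_) (norm_nonneg c)
        calc l1Norm (X j + C (ξ j)) ^ K j ≤ (1 + B) ^ K j :=
              pow_le_pow_left₀ (l1Norm_nonneg _) (l1Norm_linear j) _
          _ ≤ (1 + B) ^ r j :=
              pow_le_pow_right₀ (by linarith) ((monomial_le_degreeOf j hK).trans (hr j))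
    _ = (1 + B) ^ (∑ j, r j) * ‖c‖ := by rw [Finset.prod_pow_eq_pow_sum]

theorem degreeOf_det_le {σ ι R : Type*} [CommRing R] [Fintype ι] [DecidableEq ι]
    {M : Matrix ι ι (MvPolynomial σ R)} {l : σ} {B : ℕ} (hM : ∀ i j, (M i j).degreeOf l ≤ B) :
    M.det.degreeOf l ≤ Fintype.card ι * B := by
  rw [Matrix.det_apply']
  refine (degreeOf_sum_le _ _ _).trans (Finset.sup_le fun e _ => ?_)
  rw [← map_intCast (C : R →+* MvPolynomial σ R)]
  calc degreeOf l (C _ * ∏ i, M (e i) i) ≤ ∑ i, degreeOf l (M (e i) i) :=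
        (degreeOf_C_mul_le _ _ _).trans (degreeOf_prod_le _ _ _)
    _ ≤ ∑ _i : ι, B := Finset.sum_le_sum fun i _ => hM _ _
    _ = Fintype.card ι * B := by rw [Finset.sum_const, Finset.card_univ, smul_eq_mul]

section Index

variable {σ ι R A : Type*} [CommRing R] [CommRing A] [Algebra R A]

/-- The index of `P` at `ξ` for the weights `w` is at least `θ`: every Hasse derivative `∂_I P` of
weight less than `θ` vanishes at `ξ`. Roth's lemma uses the weights `w j = 1 / r j`. -/
def HasIndexGE (w : σ → ℝ) (ξ : σ → A) (θ : ℝ) (P : MvPolynomial σ R) : Prop :=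
  ∀ I, aeval ξ (mvHasseDeriv I P) ≠ 0 → θ ≤ Finsupp.weight w I

namespace HasIndexGE

variable {w : σ → ℝ} {ξ : σ → A} {θ θ' : ℝ} {P Q : MvPolynomial σ R}

theorem mono (h : HasIndexGE w ξ θ P) (hle : θ' ≤ θ) : HasIndexGE w ξ θ' P :=
  fun I hI => hle.trans (h I hI)

theorem of_nonpos (hw : ∀ j, 0 ≤ w j) (hθ : θ ≤ 0) (P : MvPolynomial σ R) :
    HasIndexGE w ξ θ P := fun I _ =>
  hθ.trans (Finset.sum_nonneg fun j _ => nsmul_nonneg (hw j) (I j))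

theorem mul (hP : HasIndexGE w ξ θ P) (hQ : HasIndexGE w ξ θ' Q) :
    HasIndexGE w ξ (θ + θ') (P * Q) := by
  classical
  intro I hI
  rw [← coeff_mvTaylor, map_mul] at hI
  obtain ⟨J, hJ, K, hK, rfl⟩ := Finset.mem_add.1 (support_mul _ _ (mem_support_iff.2 hI))
  rw [mem_support_iff, coeff_mvTaylor] at hJ hK
  rw [map_add]
  exact add_le_add (hP J hJ) (hQ K hK)

theorem sum {S : Finset ι} {f : ι → MvPolynomial σ R} (hf : ∀ i ∈ S, HasIndexGE w ξ θ (f i)) :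
    HasIndexGE w ξ θ (∑ i ∈ S, f i) := by
  intro I hI
  rw [map_sum, map_sum] at hI
  obtain ⟨i, hi, hne⟩ := Finset.exists_ne_zero_of_sum_ne_zero hI
  exact hf i hi I hne

theorem prod (hw : ∀ j, 0 ≤ w j) {S : Finset ι} {f : ι → MvPolynomial σ R} {θ : ι → ℝ}
    (hf : ∀ i ∈ S, HasIndexGE w ξ (θ i) (f i)) :
    HasIndexGE w ξ (∑ i ∈ S, θ i) (∏ i ∈ S, f i) := by
  classical
  induction S using Finset.induction_on with
  | empty => exact of_nonpos hw le_rfl _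
  | insert i S hi ih =>
    rw [Finset.sum_insert hi, Finset.prod_insert hi]
    exact (hf i (Finset.mem_insert_self i S)).mul
      (ih fun j hj => hf j (Finset.mem_insert_of_mem hj))

theorem det [Fintype ι] [DecidableEq ι] (hw : ∀ j, 0 ≤ w j) {M : Matrix ι ι (MvPolynomial σ R)}
    {θ : ι → ℝ} (hM : ∀ i j, HasIndexGE w ξ (θ j) (M i j)) :
    HasIndexGE w ξ (∑ j, θ j) M.det := by
  rw [Matrix.det_apply']
  refine sum fun e _ => ?_
  rw [← zero_add (∑ j, θ j)]
  exact (of_nonpos hw le_rfl _).mul (prod hw fun i _ => hM (e i) i)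

theorem mvHasseDeriv [Finite σ] (hP : HasIndexGE w ξ θ P) (I : σ →₀ ℕ) :
    HasIndexGE w ξ (θ - Finsupp.weight w I) (mvHasseDeriv I P) := by
  cases nonempty_fintype σ
  intro K hK
  rw [mvHasseDeriv_mvHasseDeriv, map_nsmul] at hK
  have := hP (K + I) (right_ne_zero_of_smul hK)
  rw [map_add] at this
  linarith

end HasIndexGE

end Index

theorem pow_dvd_aeval_of_aeval_mvHasseDeriv_eq_zero {σ R A : Type*} [Finite σ] [CommSemiring R]
    [CommRing A] [Algebra R A] {ξ η : σ → A} {a : A} (ha : ∀ j, a ∣ η j - ξ j) {s : ℕ}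
    {P : MvPolynomial σ R} (hP : ∀ I, I.degree < s → aeval ξ (mvHasseDeriv I P) = 0) :
    a ^ s ∣ aeval η P := by
  cases nonempty_fintype σ
  rw [← aeval_sub_mvTaylor ξ, aeval_def, eval₂_eq']
  refine Finset.dvd_sum fun I hI => Dvd.dvd.mul_left ?_ _
  have le_degree : s ≤ I.degree := by
    by_contra! hlt
    rw [mem_support_iff, coeff_mvTaylor] at hI
    exact hI (hP I hlt)
  rw [Finsupp.degree_eq_sum] at le_degree
  refine (pow_dvd_pow a le_degree).trans ?_
  rw [← Finset.prod_pow_eq_pow_sum]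
  exact Finset.prod_dvd_prod_of_dvd _ _ fun j _ => pow_dvd_pow_of_dvd (ha j) _

section Kronecker

variable {n : ℕ} {R : Type*} [CommSemiring R]

/-- Kronecker's substitution `X_j ↦ X ^ (B ^ j)`. -/
def kroneckerSubst (n B : ℕ) : MvPolynomial (Fin n) R →ₐ[R] Polynomial R :=
  aeval fun j => Polynomial.X ^ B ^ (j : ℕ)

theorem kroneckerSubst_monomial (B : ℕ) (K : Fin n →₀ ℕ) (c : R) :
    kroneckerSubst n B (monomial K c) = Polynomial.monomial (∑ j, K j * B ^ (j : ℕ)) c := by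
  rw [kroneckerSubst, aeval_monomial, Finsupp.prod_fintype _ _ fun _ => pow_zero _,
    ← Polynomial.C_mul_X_pow_eq_monomial, ← Finset.prod_pow_eq_pow_sum]
  simp only [← pow_mul, mul_comm (B ^ _), Polynomial.C_eq_algebraMap]

theorem eq_of_sum_mul_pow_eq {B : ℕ} {K M : Fin n →₀ ℕ} (hK : ∀ j, K j < B) (hM : ∀ j, M j < B)
    (h : ∑ j, K j * B ^ (j : ℕ) = ∑ j, M j * B ^ (j : ℕ)) : K = M := by
  have digits_eq : (fun j => ⟨K j, hK j⟩ : Fin n → Fin B) = fun j => ⟨M j, hM j⟩ :=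
    finFunctionFinEquiv.injective (Fin.ext (by simpa only [finFunctionFinEquiv_apply] using h))
  ext j
  exact congrArg Fin.val (congrFun digits_eq j)

theorem eq_zero_of_kroneckerSubst_eq_zero {B : ℕ} {P : MvPolynomial (Fin n) R}
    (hB : ∀ j, P.degreeOf j < B) (h : kroneckerSubst n B P = 0) : P = 0 := by
  by_contra hP
  obtain ⟨K, hK⟩ := support_nonempty.2 hP
  have lt_of_mem {M : Fin n →₀ ℕ} (hM : M ∈ P.support) (j : Fin n) : M j < B :=
    (monomial_le_degreeOf j hM).trans_lt (hB j)
  have coeff_eq : (kroneckerSubst n B P).coeff (∑ j, K j * B ^ (j : ℕ)) = coeff K P := by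
    conv_lhs => rw [P.as_sum, map_sum]
    simp only [kroneckerSubst_monomial, Polynomial.finsetSum_coeff]
    rw [Finset.sum_eq_single_of_mem K hK fun M hM hMK => ?_, Polynomial.coeff_monomial_same]
    exact Polynomial.coeff_monomial_of_ne _ fun h => hMK
      (eq_of_sum_mul_pow_eq (lt_of_mem hK) (lt_of_mem hM) h).symm
  rw [h, Polynomial.coeff_zero] at coeff_eq
  exact mem_support_iff.1 hK coeff_eq.symm

end Kronecker

section Wronskian

variable {K : Type*} [Field K]

theorem exists_det_ne_zero_of_forall_dotProduct_eq_zero {κ : Type*} [Fintype κ] [DecidableEq κ]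
    {V : Set (κ → K)} (hV : ∀ c, (∀ v ∈ V, c ⬝ᵥ v = 0) → c = 0) :
    ∃ f : κ → κ → K, (∀ i, f i ∈ V) ∧ (Matrix.of f).det ≠ 0 := by
  have span_eq_top : Submodule.span K V = ⊤ := by
    by_contra hne
    obtain ⟨F, hF, hVF⟩ := Submodule.exists_le_ker_of_lt_top _ (lt_top_iff_ne_top.2 hne)
    obtain ⟨c, rfl⟩ := (dotProductEquiv K κ).surjective F
    exact hF (by rw [hV c fun v hv => hVF (Submodule.subset_span hv), map_zero])
  obtain ⟨f, hfV, -, hf⟩ := Submodule.exists_fun_fin_finrank_span_eq K V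
  have finrank_eq : Module.finrank K (Submodule.span K V) = Fintype.card κ := by
    rw [span_eq_top, finrank_top, Module.finrank_fintype_fun_eq_card]
  let e : κ ≃ Fin (Module.finrank K (Submodule.span K V)) :=
    (Fintype.equivFin κ).trans (finCongr finrank_eq.symm)
  refine ⟨f ∘ e, fun i => hfV (e i), ?_⟩
  rw [← isUnit_iff_ne_zero, ← Matrix.isUnit_iff_isUnit_det,
    ← Matrix.linearIndependent_rows_iff_isUnit]
  exact hf.comp e e.injective

theorem finrank_map_lt_of_mem_ker {M N : Type*} [AddCommGroup M] [Module K M] [AddCommGroup N]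
    [Module K N] (T : M →ₗ[K] N) {W : Submodule K M} [FiniteDimensional K W] {g : M} (hgW : g ∈ W)
    (hg : g ≠ 0) (hT : T g = 0) : Module.finrank K (W.map T) < Module.finrank K W := by
  have rank_nullity := LinearMap.finrank_range_add_finrank_ker (T.domRestrict W)
  rw [LinearMap.range_domRestrict] at rank_nullity
  have : Nontrivial (LinearMap.ker (T.domRestrict W)) :=
    ⟨⟨⟨g, hgW⟩, hT⟩, 0, fun h => hg congr(($h : W))⟩
  have := Module.finrank_pos (R := K) (M := LinearMap.ker (T.domRestrict W))
  omega

theorem exists_forall_totalDegree_le {σ : Type*} {W : Submodule K (MvPolynomial σ K)} (hW : W.FG) :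
    ∃ B, ∀ f ∈ W, f.totalDegree ≤ B := by
  obtain ⟨G, rfl⟩ := hW
  refine ⟨G.sup totalDegree, fun f hf => ?_⟩
  have span_le : Submodule.span K G ≤ restrictTotalDegree σ K (G.sup totalDegree) :=
    Submodule.span_le.2 fun g hg => (mem_restrictTotalDegree _ _ _).2 (Finset.le_sup hg)
  exact (mem_restrictTotalDegree _ _ _).1 (span_le hf)

variable [CharZero K]

theorem exists_eq_C_mul_of_wronskian_eq_zero {f g : Polynomial K} (hg : g ≠ 0)
    (h : Polynomial.wronskian f g = 0) : ∃ c, f = Polynomial.C c * g := by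
  obtain ⟨f', g', d, coprime, rfl, rfl⟩ := UniqueFactorizationMonoid.exists_reduced_factors' f g hg
  have hd : d ≠ 0 := left_ne_zero_of_mul hg
  have wronskian_eq : Polynomial.wronskian (d * f') (d * g') =
      d ^ 2 * Polynomial.wronskian f' g' := by
    simp only [Polynomial.wronskian, Polynomial.derivative_mul]
    ring
  rw [wronskian_eq, mul_eq_zero, or_iff_right (pow_ne_zero 2 hd),
    coprime.isCoprime.wronskian_eq_zero_iff] at h
  obtain ⟨a, rfl⟩ := Polynomial.natDegree_eq_zero.1 (Polynomial.derivative_eq_zero.1 h.1)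
  obtain ⟨b, rfl⟩ := Polynomial.natDegree_eq_zero.1 (Polynomial.derivative_eq_zero.1 h.2)
  have hb : b ≠ 0 := by
    rintro rfl
    exact hg (by rw [map_zero, mul_zero])
  exact ⟨a / b, by rw [mul_left_comm, ← Polynomial.C_mul, div_mul_cancel₀ a hb]⟩

theorem exists_finset_forall_X_sub_C_pow_dvd (s : ℕ) (W : Submodule K (Polynomial K))
    [FiniteDimensional K W] (hW : Module.finrank K W ≤ s) :
    ∃ S : Finset K, ∀ t ∉ S, ∀ f ∈ W, (Polynomial.X - Polynomial.C t) ^ s ∣ f → f = 0 := by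
  classical
  induction s generalizing W with
  | zero =>
    rw [Nat.le_zero, Submodule.finrank_eq_zero] at hW
    exact ⟨∅, fun t _ f hf _ => (Submodule.mem_bot K).1 (hW ▸ hf)⟩
  | succ s ih =>
    rcases eq_or_ne W ⊥ with rfl | hW_bot
    · exact ⟨∅, fun t _ f hf _ => (Submodule.mem_bot K).1 hf⟩
    obtain ⟨g, hgW, hg⟩ := Submodule.exists_mem_ne_zero_of_ne_bot hW_bot
    let T := (Polynomial.wronskianBilin K).flip g
    have finrank_lt : Module.finrank K (W.map T) < Module.finrank K W :=
      finrank_map_lt_of_mem_ker T hgW hg (Polynomial.wronskian_self_eq_zero g)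
    obtain ⟨S, hS⟩ := ih (W.map T) (by omega)
    refine ⟨S ∪ g.roots.toFinset, fun t ht f hf hdvd => ?_⟩
    simp only [Finset.mem_union, not_or, Multiset.mem_toFinset, Polynomial.mem_roots hg] at ht
    have dvd_wronskian : (Polynomial.X - Polynomial.C t) ^ s ∣ Polynomial.wronskian f g :=
      dvd_sub (((pow_dvd_pow _ s.le_succ).trans hdvd).mul_right _)
        ((Polynomial.pow_sub_one_dvd_derivative_of_pow_dvd hdvd).mul_right _)
    obtain ⟨c, rfl⟩ := exists_eq_C_mul_of_wronskian_eq_zero hg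
      (hS t ht.1 _ (Submodule.mem_map_of_mem hf) dvd_wronskian)
    have isRoot : (Polynomial.C c * g).IsRoot t :=
      Polynomial.dvd_iff_isRoot.1 ((dvd_pow_self _ s.succ_ne_zero).trans hdvd)
    rw [Polynomial.root_mul, Polynomial.IsRoot.def, Polynomial.eval_C] at isRoot
    rw [isRoot.resolve_right ht.2, map_zero, zero_mul]

theorem det_hasseDeriv_ne_zero {s : ℕ} {ψ : Fin s → Polynomial K} (hψ : LinearIndependent K ψ) :
    (Matrix.of fun i j : Fin s => Polynomial.hasseDeriv (j : ℕ) (ψ i)).det ≠ 0 := by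
  have := FiniteDimensional.span_of_finite K (Set.finite_range ψ)
  obtain ⟨S, hS⟩ := exists_finset_forall_X_sub_C_pow_dvd s (Submodule.span K (Set.range ψ))
    ((finrank_range_le_card ψ).trans (Fintype.card_fin s).le)
  obtain ⟨t, ht⟩ := Infinite.exists_notMem_finset S
  intro hdet
  have eval_det_eq_zero := congrArg (Polynomial.evalRingHom t) hdet
  rw [RingHom.map_det, map_zero] at eval_det_eq_zero
  obtain ⟨c, hc, hmul⟩ := Matrix.exists_vecMul_eq_zero_iff.2 eval_det_eq_zero
  have sum_eq_zero : ∑ i, c i • ψ i = 0 := by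
    refine hS t ht _ (Submodule.sum_mem _ fun i _ => Submodule.smul_mem _ _
      (Submodule.subset_span ⟨i, rfl⟩)) ?_
    rw [Polynomial.X_sub_C_pow_dvd_iff, Polynomial.X_pow_dvd_iff]
    intro d hd
    rw [← Polynomial.taylor_apply, Polynomial.taylor_coeff, map_sum, Polynomial.eval_finsetSum]
    simpa [Matrix.vecMul, dotProduct] using congrFun hmul ⟨d, hd⟩
  exact hc (funext (Fintype.linearIndependent_iff.1 hψ c sum_eq_zero))

theorem exists_forall_aeval_mvHasseDeriv_eq_zero {n : ℕ} (W : Submodule K (MvPolynomial (Fin n) K))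
    [FiniteDimensional K W] {s : ℕ} (hW : Module.finrank K W ≤ s) :
    ∃ ξ : Fin n → K, ∀ f ∈ W,
      (∀ I : Fin n →₀ ℕ, I.degree < s → aeval ξ (mvHasseDeriv I f) = 0) → f = 0 := by
  obtain ⟨B, hB⟩ := exists_forall_totalDegree_le (Submodule.fg_iff_finiteDimensional W |>.2 ‹_›)
  let Φ := (kroneckerSubst (R := K) n (B + 1)).toLinearMap
  have : FiniteDimensional K (W.map Φ) := Module.Finite.map W Φ
  obtain ⟨S, hS⟩ := exists_finset_forall_X_sub_C_pow_dvd s (W.map Φ)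
    ((Submodule.finrank_map_le Φ W).trans hW)
  obtain ⟨t, ht⟩ := Infinite.exists_notMem_finset S
  refine ⟨fun j => t ^ (B + 1) ^ (j : ℕ), fun f hf h => ?_⟩
  have dvd : (Polynomial.X - Polynomial.C t) ^ s ∣ kroneckerSubst n (B + 1) f := by
    refine pow_dvd_aeval_of_aeval_mvHasseDeriv_eq_zero
      (ξ := fun j : Fin n => algebraMap K (Polynomial K) (t ^ (B + 1) ^ (j : ℕ)))
      (fun j => ?_) fun I hI => ?_
    · rw [← Polynomial.C_eq_algebraMap, Polynomial.C_pow]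
      exact sub_dvd_pow_sub_pow _ _ _
    · exact (aeval_algebraMap_apply _ _ _).trans (by rw [h I hI, map_zero])
  exact eq_zero_of_kroneckerSubst_eq_zero
    (fun j => Nat.lt_succ_of_le ((degreeOf_le_totalDegree f j).trans (hB f hf)))
    (hS t ht _ (Submodule.mem_map_of_mem hf) dvd)

theorem exists_det_mvHasseDeriv_ne_zero {n : ℕ} {κ : Type*} [Fintype κ] [DecidableEq κ]
    {φ : κ → MvPolynomial (Fin n) K} (hφ : LinearIndependent K φ) :
    ∃ I : κ → Fin n →₀ ℕ, (∀ i, (I i).degree < Fintype.card κ) ∧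
      (Matrix.of fun i k => mvHasseDeriv (I i) (φ k)).det ≠ 0 := by
  have := FiniteDimensional.span_of_finite K (Set.finite_range φ)
  obtain ⟨ξ, hξ⟩ := exists_forall_aeval_mvHasseDeriv_eq_zero (Submodule.span K (Set.range φ))
    (finrank_range_le_card φ)
  obtain ⟨f, hf, hdet⟩ := exists_det_ne_zero_of_forall_dotProduct_eq_zero
    (V := (fun I k => aeval ξ (mvHasseDeriv I (φ k))) '' {I | I.degree < Fintype.card κ})
    fun c hc => by
      refine funext (Fintype.linearIndependent_iff.1 hφ c (hξ _ ?_ fun I hI => ?_))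
      · exact Submodule.sum_mem _ fun k _ => Submodule.smul_mem _ _ (Submodule.subset_span ⟨k, rfl⟩)
      · simpa [dotProduct] using hc _ ⟨I, hI, rfl⟩
  choose I hI hIf using hf
  refine ⟨I, hI, fun h => hdet ?_⟩
  obtain rfl : (fun i k => aeval ξ (mvHasseDeriv (I i) (φ k))) = f := funext hIf
  have := congrArg (aeval ξ) h
  rwa [AlgHom.map_det, map_zero] at this

end Wronskian

section SeparatedProduct

variable {n : ℕ} {R : Type*} [CommSemiring R]

/-- The product `ψ(X₀) φ(X₁, …, Xₙ)` of polynomials in separated variables. -/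
def sepProd (ψ : Polynomial R) (φ : MvPolynomial (Fin n) R) : MvPolynomial (Fin (n + 1)) R :=
  Polynomial.aeval (X 0) ψ * rename Fin.succ φ

theorem finSuccEquiv_sepProd (ψ : Polynomial R) (φ : MvPolynomial (Fin n) R) :
    finSuccEquiv R n (sepProd ψ φ) = ψ.map C * Polynomial.C φ := by
  have map_C (a : R) : finSuccEquiv R n (C a) = Polynomial.C (C a) :=
    ((finSuccEquiv R n).symm_apply_eq.1 (RingHom.congr_fun (finSuccEquiv_comp_C_eq_C n) a)).symm
  have map_head : finSuccEquiv R n (Polynomial.aeval (X 0) ψ) = ψ.map C := by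
    induction ψ using Polynomial.induction_on' with
    | add p q hp hq => simp only [map_add, Polynomial.map_add, hp, hq]
    | monomial k a =>
      rw [Polynomial.aeval_monomial, algebraMap_eq, map_mul, map_pow, finSuccEquiv_X_zero,
        map_C, Polynomial.map_monomial, Polynomial.C_mul_X_pow_eq_monomial]
  have map_tail : finSuccEquiv R n (rename Fin.succ φ) = Polynomial.C φ := by
    induction φ using MvPolynomial.induction_on with
    | C a => rw [rename_C, map_C]
    | add p q hp hq => simp only [map_add, hp, hq]
    | mul_X p j hp => simp only [map_mul, hp, rename_X, finSuccEquiv_X_succ]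
  rw [sepProd, map_mul, map_head, map_tail]

theorem coeff_cons_sepProd (ψ : Polynomial R) (φ : MvPolynomial (Fin n) R) (k : ℕ)
    (K : Fin n →₀ ℕ) : coeff (Finsupp.cons k K) (sepProd ψ φ) = ψ.coeff k * coeff K φ := by
  rw [← finSuccEquiv_coeff_coeff, finSuccEquiv_sepProd, Polynomial.coeff_mul_C,
    Polynomial.coeff_map, coeff_C_mul]

theorem aeval_sepProd {A : Type*} [CommSemiring A] [Algebra R A] (ξ : Fin (n + 1) → A)
    (ψ : Polynomial R) (φ : MvPolynomial (Fin n) R) :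
    aeval ξ (sepProd ψ φ) = Polynomial.aeval (ξ 0) ψ * aeval (Fin.tail ξ) φ := by
  rw [sepProd, map_mul, ← Polynomial.aeval_algHom_apply, aeval_X, aeval_rename]
  rfl

theorem ext_coeff_cons {P Q : MvPolynomial (Fin (n + 1)) R}
    (h : ∀ k K, coeff (Finsupp.cons k K) P = coeff (Finsupp.cons k K) Q) : P = Q := by
  ext K
  rw [← Finsupp.cons_tail K, h]

theorem mvHasseDeriv_cons_sepProd (j : ℕ) (I : Fin n →₀ ℕ) (ψ : Polynomial R)
    (φ : MvPolynomial (Fin n) R) :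
    mvHasseDeriv (Finsupp.cons j I) (sepProd ψ φ) =
      sepProd (Polynomial.hasseDeriv j ψ) (mvHasseDeriv I φ) := by
  refine ext_coeff_cons fun k K => ?_
  have cons_add_cons :
      (Finsupp.cons k K + Finsupp.cons j I : Fin (n + 1) →₀ ℕ) = Finsupp.cons (k + j) (K + I) := by
    ext i
    cases i using Fin.cases <;> simp
  rw [coeff_mvHasseDeriv, cons_add_cons, coeff_cons_sepProd, coeff_cons_sepProd,
    coeff_mvHasseDeriv, Polynomial.hasseDeriv_coeff, Fin.prod_univ_succ]
  simp only [Finsupp.cons_zero, Finsupp.cons_succ]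
  ring

end SeparatedProduct

section Separation

variable {K : Type*} [Field K]

theorem exists_linearIndependent_eq_sum_smul {κ V : Type*} [Fintype κ] [AddCommGroup V]
    [Module K V] (v : κ → V) :
    ∃ s ≤ Fintype.card κ, ∃ (c : Fin s → κ → K) (b : Fin s → V),
      LinearIndependent K c ∧ LinearIndependent K b ∧ ∀ k, v k = ∑ i, c i k • b i := by
  let W := Submodule.span K (Set.range v)
  have := FiniteDimensional.span_of_finite K (Set.finite_range v)
  let v' (k : κ) : W := ⟨v k, Submodule.subset_span ⟨k, rfl⟩⟩
  let b := Module.finBasis K W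
  let evalAt : Module.Dual K W →ₗ[K] κ → K := LinearMap.pi fun k => Module.Dual.eval K W (v' k)
  have ker_evalAt : LinearMap.ker evalAt = ⊥ := by
    refine LinearMap.ker_eq_bot'.2 fun F hF => ?_
    rw [Submodule.linearMap_eq_zero_iff_of_eq_span F rfl]
    rintro ⟨_, k, rfl⟩
    exact congrFun hF k
  refine ⟨Module.finrank K W, finrank_range_le_card v, fun i => evalAt (b.dualBasis i),
    fun i => b i, b.dualBasis.linearIndependent.map' evalAt ker_evalAt,
    b.linearIndependent.map' W.subtype (Submodule.ker_subtype W), fun k => ?_⟩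
  have sum_repr := congrArg Subtype.val (b.sum_repr (v' k))
  simp only [Submodule.coe_sum, Submodule.coe_smul] at sum_repr
  simpa [evalAt] using sum_repr.symm

theorem exists_eq_sum_sepProd {n d : ℕ} {P : MvPolynomial (Fin (n + 1)) K}
    (hP : P.degreeOf 0 < d) :
    ∃ s ≤ d, ∃ (ψ : Fin s → Polynomial K) (φ : Fin s → MvPolynomial (Fin n) K),
      LinearIndependent K ψ ∧ LinearIndependent K φ ∧ P = ∑ k, sepProd (ψ k) (φ k) := by
  obtain ⟨s, hs, c, φ, hc, hφ, hsum⟩ := exists_linearIndependent_eq_sum_smul (K := K)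
    fun k : Fin d => (finSuccEquiv K n P).coeff k
  let toPoly : (Fin d → K) →ₗ[K] Polynomial K :=
    (Polynomial.degreeLT K d).subtype ∘ₗ (Polynomial.degreeLTEquiv K d).symm.toLinearMap
  have coeff_toPoly (f : Fin d → K) (k : Fin d) : (toPoly f).coeff k = f k :=
    congrFun ((Polynomial.degreeLTEquiv K d).apply_symm_apply f) k
  have ker_toPoly : LinearMap.ker toPoly = ⊥ := by
    refine LinearMap.ker_eq_bot'.2 fun f hf => funext fun k => ?_
    rw [← coeff_toPoly f k, hf, Polynomial.coeff_zero, Pi.zero_apply]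
  refine ⟨s, by simpa using hs, fun i => toPoly (c i), φ, hc.map' toPoly ker_toPoly, hφ, ?_⟩
  refine ext_coeff_cons fun k M => ?_
  simp only [coeff_sum, coeff_cons_sepProd]
  rw [← finSuccEquiv_coeff_coeff]
  by_cases hk : k < d
  · simp only [hsum ⟨k, hk⟩, coeff_sum, coeff_smul, smul_eq_mul]
    exact Finset.sum_congr rfl fun i _ => congrArg (· * _) (coeff_toPoly (c i) ⟨k, hk⟩).symm
  · have degree_lt (f : Fin d → K) : (toPoly f).degree < k :=
      (Polynomial.mem_degreeLT.1 (Subtype.prop _)).trans_le (by exact_mod_cast not_lt.1 hk)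
    rw [Polynomial.coeff_eq_zero_of_natDegree_lt (by rw [natDegree_finSuccEquiv]; omega),
      coeff_zero]
    simp only [Polynomial.coeff_eq_zero_of_degree_lt (degree_lt _), zero_mul, Finset.sum_const_zero]

end Separation

section HasseWronskian

variable {n s : ℕ}

theorem weight_cons (w : Fin (n + 1) → ℝ) (k : ℕ) (K : Fin n →₀ ℕ) :
    Finsupp.weight w (Finsupp.cons k K) = k * w 0 + Finsupp.weight (Fin.tail w) K := by
  simp [Finsupp.weight_apply, Finsupp.sum_fintype, Fin.sum_univ_succ, Fin.tail]

/-- The generalized Wronskian of `P` used in the inductive step of Roth's lemma: its `(i, j)` entry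
is the Hasse derivative of `P` of order `j` in the first variable and `I i` in the others. -/
def hasseWronskian {R : Type*} [CommRing R] (I : Fin s → Fin n →₀ ℕ)
    (P : MvPolynomial (Fin (n + 1)) R) : MvPolynomial (Fin (n + 1)) R :=
  (Matrix.of fun i j : Fin s => mvHasseDeriv (Finsupp.cons (j : ℕ) (I i)) P).det

theorem map_hasseWronskian {R S : Type*} [CommRing R] [CommRing S] (f : R →+* S)
    (I : Fin s → Fin n →₀ ℕ) (P : MvPolynomial (Fin (n + 1)) R) :
    map f (hasseWronskian I P) = hasseWronskian I (map f P) := by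
  rw [hasseWronskian, RingHom.map_det]
  exact congrArg Matrix.det <| Matrix.ext fun i j =>
    map_mvHasseDeriv f (Finsupp.cons (j : ℕ) (I i)) P

theorem degreeOf_hasseWronskian_le {R : Type*} [CommRing R] (I : Fin s → Fin n →₀ ℕ)
    (P : MvPolynomial (Fin (n + 1)) R) (l : Fin (n + 1)) :
    (hasseWronskian I P).degreeOf l ≤ s * P.degreeOf l := by
  refine (degreeOf_det_le fun i j => degreeOf_mvHasseDeriv_le _ P l).trans_eq ?_
  rw [Fintype.card_fin]

theorem l1Norm_hasseWronskian_le {R : Type*} [NormedCommRing R] [NormOneClass R]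
    {r : Fin (n + 1) → ℕ} (I : Fin s → Fin n →₀ ℕ) {P : MvPolynomial (Fin (n + 1)) R}
    (hr : ∀ j, P.degreeOf j ≤ r j) :
    l1Norm (hasseWronskian I P) ≤ s.factorial * (2 ^ (∑ j, r j) * l1Norm P) ^ s := by
  refine (l1Norm_det_le fun i j => l1Norm_mvHasseDeriv_le _ hr).trans_eq ?_
  rw [Fintype.card_fin]

theorem HasIndexGE.hasseWronskian {R A : Type*} [CommRing R] [CommRing A] [Algebra R A]
    {w : Fin (n + 1) → ℝ} (hw : ∀ j, 0 ≤ w j) {ξ : Fin (n + 1) → A} {θ η : ℝ}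
    {P : MvPolynomial (Fin (n + 1)) R} (hP : HasIndexGE w ξ θ P) {I : Fin s → Fin n →₀ ℕ}
    (hI : ∀ i, Finsupp.weight (Fin.tail w) (I i) ≤ η) :
    HasIndexGE w ξ (∑ j : Fin s, max 0 (θ - η - j * w 0)) (hasseWronskian I P) := by
  refine HasIndexGE.det hw fun i j : Fin s => ?_
  rcases le_total (θ - η - j * w 0) 0 with h | h
  · exact .of_nonpos hw (max_le le_rfl h) _
  · refine (hP.mvHasseDeriv _).mono ?_
    rw [max_eq_right h, weight_cons]
    linarith [hI i]

theorem exists_hasseWronskian_eq_sepProd {K : Type*} [Field K] [CharZero K] {d : ℕ}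
    {P : MvPolynomial (Fin (n + 1)) K} (hP : P ≠ 0) (hd : P.degreeOf 0 < d) :
    ∃ s, 0 < s ∧ s ≤ d ∧ ∃ I : Fin s → Fin n →₀ ℕ, (∀ i, (I i).degree < s) ∧
      ∃ Ψ ≠ 0, ∃ Φ ≠ 0, hasseWronskian I P = sepProd Ψ Φ := by
  obtain ⟨s, hs, ψ, φ, hψ, hφ, rfl⟩ := exists_eq_sum_sepProd hd
  obtain ⟨I, hI, hdet⟩ := exists_det_mvHasseDeriv_ne_zero hφ
  rw [Fintype.card_fin] at hI
  have s_pos : 0 < s := by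
    rw [pos_iff_ne_zero]
    rintro rfl
    exact hP Finset.sum_empty
  refine ⟨s, s_pos, hs, I, hI, _, det_hasseDeriv_ne_zero hψ, _, hdet, ?_⟩
  rw [sepProd, AlgHom.map_det, AlgHom.map_det, mul_comm, ← Matrix.det_mul, hasseWronskian]
  refine congrArg Matrix.det <| Matrix.ext fun i j => ?_
  simp only [Matrix.of_apply, map_sum, mvHasseDeriv_cons_sepProd]
  simp only [Matrix.mul_apply, AlgHom.mapMatrix_apply, Matrix.map_apply, Matrix.of_apply, sepProd,
    mul_comm]

end HasseWronskian

section Slices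

variable {n : ℕ} {R S : Type*} [CommSemiring R] [CommSemiring S]

/-- The polynomial in the first variable that `P` has as the coefficient of the monomial `K` in
the remaining variables. -/
def headSlice (K : Fin n →₀ ℕ) (P : MvPolynomial (Fin (n + 1)) R) : Polynomial R :=
  ∑ k ∈ Finset.range (P.degreeOf 0 + 1), Polynomial.monomial k (coeff (Finsupp.cons k K) P)

theorem coeff_headSlice (K : Fin n →₀ ℕ) (P : MvPolynomial (Fin (n + 1)) R) (k : ℕ) :
    (headSlice K P).coeff k = coeff (Finsupp.cons k K) P := by
  simp only [headSlice, Polynomial.finsetSum_coeff, Polynomial.coeff_monomial, Finset.sum_ite_eq',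
    Finset.mem_range, Nat.lt_succ_iff]
  refine ite_eq_left_iff.2 fun hk => (notMem_support_iff.1 fun hmem => hk ?_).symm
  simpa only [Finsupp.cons_zero] using monomial_le_degreeOf 0 hmem

theorem exists_smul_eq_sepProd [NoZeroDivisors S] {f : R →+* S} (hf : Function.Injective f)
    {P : MvPolynomial (Fin (n + 1)) R} {ψ : Polynomial S} {φ : MvPolynomial (Fin n) S}
    (hψ : ψ ≠ 0) (hφ : φ ≠ 0) (hP : map f P = sepProd ψ φ) :
    ∃ k K, coeff (Finsupp.cons k K) P ≠ 0 ∧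
      coeff (Finsupp.cons k K) P • P = sepProd (headSlice K P) ((finSuccEquiv R n P).coeff k) := by
  have coeff_eq (k : ℕ) (K : Fin n →₀ ℕ) :
      f (coeff (Finsupp.cons k K) P) = ψ.coeff k * coeff K φ := by
    rw [← coeff_map, hP, coeff_cons_sepProd]
  obtain ⟨k, hk⟩ := Polynomial.support_nonempty.2 hψ
  obtain ⟨K, hK⟩ := ne_zero_iff.1 hφ
  refine ⟨k, K, fun h => ?_, ext_coeff_cons fun l M => hf ?_⟩
  · refine mul_ne_zero (Polynomial.mem_support_iff.1 hk) hK ?_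
    rw [← coeff_eq, h, map_zero]
  · rw [coeff_smul, smul_eq_mul, coeff_cons_sepProd, coeff_headSlice, finSuccEquiv_coeff_coeff]
    simp only [map_mul, coeff_eq]
    ring

theorem l1Norm_coeff_finSuccEquiv_le {R : Type*} [NormedCommRing R]
    (P : MvPolynomial (Fin (n + 1)) R) (k : ℕ) :
    l1Norm ((finSuccEquiv R n P).coeff k) ≤ l1Norm P := by
  classical
  let S := ((finSuccEquiv R n P).coeff k).support
  have image_subset : S.image (Finsupp.cons k) ⊆ P.support := by
    refine Finset.image_subset_iff.2 fun K hK => ?_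
    rwa [mem_support_iff, ← finSuccEquiv_coeff_coeff, ← mem_support_iff]
  calc l1Norm ((finSuccEquiv R n P).coeff k)
      = ∑ K ∈ S, ‖coeff (Finsupp.cons k K) P‖ := by
        simp only [l1Norm_eq_sum subset_rfl, finSuccEquiv_coeff_coeff, S]
    _ = ∑ K ∈ S.image (Finsupp.cons k), ‖coeff K P‖ :=
        (Finset.sum_image (f := fun K => ‖coeff K P‖)
          (Finsupp.cons_right_injective k).injOn).symm
    _ ≤ l1Norm P := by
        rw [l1Norm_eq_sum subset_rfl]
        exact Finset.sum_le_sum_of_subset_of_nonneg image_subset fun _ _ _ => norm_nonneg _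

end Slices

section RothLemma

/-- The hypotheses of Roth's lemma on the rational points `x j` and the degrees `r j`: the
heights `(x j).den ^ r j` are all at least `exp L`, the degrees are small compared with `L` and
decrease rapidly, in the sense that `r i ≤ ω * r j` for `i < j` (so the order of the variables is
opposite to the usual one). -/
structure IsAdmissible {m : ℕ} (ω L : ℝ) (r : Fin m → ℕ) (x : Fin m → ℚ) : Prop where
  pos : 0 < L
  le_mul_log (j : Fin m) : L ≤ r j * Real.log (x j).den
  degree_le (j : Fin m) : r j ≤ ω * L
  degree_le_mul_degree {i j : Fin m} (hij : i < j) : r i ≤ ω * r j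

namespace IsAdmissible

variable {m : ℕ} {ω ω' L : ℝ} {r : Fin m → ℕ} {x : Fin m → ℚ}

theorem mono (h : IsAdmissible ω L r x) (hω : ω ≤ ω') : IsAdmissible ω' L r x where
  pos := h.pos
  le_mul_log := h.le_mul_log
  degree_le j := (h.degree_le j).trans (mul_le_mul_of_nonneg_right hω h.pos.le)
  degree_le_mul_degree hij :=
    (h.degree_le_mul_degree hij).trans (mul_le_mul_of_nonneg_right hω (Nat.cast_nonneg _))

theorem mul_left {s : ℕ} (h : IsAdmissible ω L r x) (hs : 0 < s) :
    IsAdmissible ω (s * L) (fun j => s * r j) x := by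
  have hs' : (0 : ℝ) < s := Nat.cast_pos.2 hs
  refine ⟨mul_pos hs' h.pos, fun j => ?_, fun j => ?_, fun {i j} hij => ?_⟩
  · rw [Nat.cast_mul, mul_assoc]
    exact mul_le_mul_of_nonneg_left (h.le_mul_log j) hs'.le
  · rw [Nat.cast_mul, mul_left_comm]
    exact mul_le_mul_of_nonneg_left (h.degree_le j) hs'.le
  · rw [Nat.cast_mul, Nat.cast_mul, mul_left_comm]
    exact mul_le_mul_of_nonneg_left (h.degree_le_mul_degree hij) hs'.le

theorem tail {r : Fin (m + 1) → ℕ} {x : Fin (m + 1) → ℚ} (h : IsAdmissible ω L r x) :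
    IsAdmissible ω L (Fin.tail r) (Fin.tail x) where
  pos := h.pos
  le_mul_log j := h.le_mul_log j.succ
  degree_le j := h.degree_le j.succ
  degree_le_mul_degree hij := h.degree_le_mul_degree (Fin.succ_lt_succ_iff.2 hij)

theorem degree_pos (h : IsAdmissible ω L r x) (j : Fin m) : 0 < r j := by
  refine pos_iff_ne_zero.2 fun hr => (h.le_mul_log j).not_gt ?_
  rw [hr, Nat.cast_zero, zero_mul]
  exact h.pos

theorem log_den_pos (h : IsAdmissible ω L r x) (j : Fin m) : 0 < Real.log (x j).den :=
  (pos_iff_pos_of_mul_pos (h.pos.trans_le (h.le_mul_log j))).1 (Nat.cast_pos.2 (h.degree_pos j))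

theorem nonneg (h : IsAdmissible ω L r x) (j : Fin m) : 0 ≤ ω :=
  nonneg_of_mul_nonneg_left ((Nat.cast_nonneg (r j)).trans (h.degree_le j)) h.pos

theorem sum_degree_le (h : IsAdmissible ω L r x) : ((∑ j, r j : ℕ) : ℝ) ≤ m * (ω * L) := by
  rw [Nat.cast_sum]
  simpa using Finset.sum_le_card_nsmul Finset.univ (fun j => (r j : ℝ)) _ fun j _ => h.degree_le j

theorem mul_inv_degree_le (h : IsAdmissible ω L r x) {κ : ℝ} (hκ : 0 ≤ κ) {j : Fin m} {k : ℕ}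
    (hk : ((x j).den : ℝ) ^ k ≤ Real.exp (κ * L)) : k * (r j : ℝ)⁻¹ ≤ κ := by
  have den_pos : (0 : ℝ) < (x j).den := Nat.cast_pos.2 (x j).pos
  have log_le := Real.log_le_log (pow_pos den_pos k) hk
  rw [Real.log_pow, Real.log_exp] at log_le
  rw [← div_eq_mul_inv, div_le_iff₀ (Nat.cast_pos.2 (h.degree_pos j))]
  refine le_of_mul_le_mul_right (log_le.trans ?_) (h.log_den_pos j)
  rw [mul_assoc]
  exact mul_le_mul_of_nonneg_left (h.le_mul_log j) hκ

end IsAdmissible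

/-- The conclusion of Roth's lemma for polynomials in `m` variables: at an admissible point, a
nonzero integral polynomial of degree at most `r j` in each variable and with small coefficients
has index less than `ε`. -/
def RothBound (m : ℕ) (ε ω : ℝ) : Prop :=
  ∀ ⦃r : Fin m → ℕ⦄ ⦃x : Fin m → ℚ⦄ ⦃L : ℝ⦄ ⦃P : MvPolynomial (Fin m) ℤ⦄,
    IsAdmissible ω L r x → P ≠ 0 → (∀ j, P.degreeOf j ≤ r j) → l1Norm P ≤ Real.exp (ω * L) →
      ¬ HasIndexGE (fun j => (r j : ℝ)⁻¹) x ε P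

theorem rothBound_zero {ε ω : ℝ} (hε : 0 < ε) : RothBound 0 ε ω := by
  intro r x L P _ hP _ _ hindex
  obtain ⟨I, hI⟩ := exists_aeval_mvHasseDeriv_ne_zero x hP
  have := hindex I hI
  rw [Subsingleton.elim I 0, map_zero] at this
  exact this.not_gt hε

variable {n s : ℕ} {ε η ω κ L : ℝ}

theorem RothBound.exists_weight_lt (hroth : RothBound n η ω) {r : Fin n → ℕ} {x : Fin n → ℚ}
    (h : IsAdmissible ω L r x) (hs : 0 < s) {P : MvPolynomial (Fin n) ℤ} (hP : P ≠ 0)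
    (hdeg : ∀ j, P.degreeOf j ≤ s * r j) (hnorm : l1Norm P ≤ Real.exp (ω * (s * L))) :
    ∃ K, aeval x (mvHasseDeriv K P) ≠ 0 ∧
      Finsupp.weight (fun j => (r j : ℝ)⁻¹) K < s * η := by
  have hindex := hroth (h.mul_left hs) hP hdeg hnorm
  simp only [HasIndexGE, not_forall, not_le] at hindex
  obtain ⟨K, hne, hlt⟩ := hindex
  have weight_eq : Finsupp.weight (fun j => ((s * r j : ℕ) : ℝ)⁻¹) K =
      (s : ℝ)⁻¹ * Finsupp.weight (fun j => (r j : ℝ)⁻¹) K := by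
    simp only [Finsupp.weight_apply, Finsupp.sum, Finset.mul_sum, nsmul_eq_mul, Nat.cast_mul,
      mul_inv]
    exact Finset.sum_congr rfl fun j _ => mul_left_comm _ _ _
  rw [weight_eq, inv_mul_lt_iff₀ (Nat.cast_pos.2 hs)] at hlt
  exact ⟨K, hne, hlt⟩

variable {r : Fin (n + 1) → ℕ} {x : Fin (n + 1) → ℚ} {P : MvPolynomial (Fin (n + 1)) ℤ}

theorem RothBound.not_hasIndexGE_of_map_eq_sepProd (hroth : RothBound n η ω)
    (h : IsAdmissible ω L r x) (hs : 0 < s) {Ψ : Polynomial ℚ} {Φ : MvPolynomial (Fin n) ℚ}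
    (hΨ : Ψ ≠ 0) (hΦ : Φ ≠ 0) (hP : map (Int.castRingHom ℚ) P = sepProd Ψ Φ)
    (hdeg : ∀ j, P.degreeOf j ≤ s * r j) (hnorm : l1Norm P ≤ Real.exp (κ * (s * L)))
    (hκ : 0 ≤ κ) (hκω : κ ≤ ω) (hκη : κ ≤ η) :
    ¬ HasIndexGE (fun j => (r j : ℝ)⁻¹) x (2 * s * η) P := by
  have sL_pos : 0 < s * L := mul_pos (Nat.cast_pos.2 hs) h.pos
  obtain ⟨k₀, K₀, hc, hsep⟩ := exists_smul_eq_sepProd Int.cast_injective hΨ hΦ hP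
  set G := headSlice K₀ P
  set H := (finSuccEquiv ℤ n P).coeff k₀
  have G_ne : G ≠ 0 := fun hG => hc <| by
    rw [← coeff_headSlice, show headSlice K₀ P = 0 from hG, Polynomial.coeff_zero]
  have H_ne : H ≠ 0 := fun hH => hc <| by
    rw [← finSuccEquiv_coeff_coeff, show (finSuccEquiv ℤ n P).coeff k₀ = 0 from hH, coeff_zero]
  obtain ⟨k, hk, hden⟩ := exists_aeval_hasseDeriv_ne_zero_and_den_pow_le (x 0) G_ne
  obtain ⟨K, hK, hweight⟩ := hroth.exists_weight_lt h.tail hs H_ne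
    (fun j => (degreeOf_coeff_finSuccEquiv P j k₀).trans (hdeg j.succ))
    ((l1Norm_coeff_finSuccEquiv_le P k₀).trans <| hnorm.trans <|
      Real.exp_le_exp.2 (mul_le_mul_of_nonneg_right hκω sL_pos.le))
  have k_le : k * (r 0 : ℝ)⁻¹ ≤ s * κ := by
    refine h.mul_inv_degree_le (mul_nonneg (Nat.cast_nonneg s) hκ) (hden.trans ?_)
    rw [Polynomial.leadingCoeff, coeff_headSlice, mul_comm (s : ℝ), mul_assoc]
    exact (norm_coeff_le_l1Norm _ P).trans hnorm
  have aeval_ne : aeval x (mvHasseDeriv (Finsupp.cons k K) P) ≠ 0 := by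
    refine right_ne_zero_of_smul (a := coeff (Finsupp.cons k₀ K₀) P) ?_
    rw [← map_smul, ← map_smul, hsep, mvHasseDeriv_cons_sepProd, aeval_sepProd]
    exact mul_ne_zero hk hK
  intro hindex
  have hle := hindex _ aeval_ne
  rw [weight_cons] at hle
  have weight_lt : Finsupp.weight (Fin.tail fun j => (r j : ℝ)⁻¹) K < s * η := hweight
  linarith [mul_le_mul_of_nonneg_left hκη s.cast_nonneg]

theorem IsAdmissible.l1Norm_hasseWronskian_le (h : IsAdmissible ω L r x)
    (hdeg : ∀ j, P.degreeOf j ≤ r j) (hnorm : l1Norm P ≤ Real.exp (ω * L)) (hs : s ≤ r 0 + 1)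
    (I : Fin s → Fin n →₀ ℕ) :
    l1Norm (hasseWronskian I P) ≤ Real.exp ((n + 3) * ω * (s * L)) := by
  have two_pow_le : (2 : ℝ) ^ (∑ j, r j) ≤ Real.exp ((n + 1) * (ω * L)) := by
    calc (2 : ℝ) ^ (∑ j, r j) ≤ Real.exp 1 ^ (∑ j, r j) := by
          gcongr
          linarith [Real.add_one_le_exp 1]
      _ = Real.exp (∑ j, r j : ℕ) := by rw [← Real.exp_nat_mul, mul_one]
      _ ≤ _ := Real.exp_le_exp.2 (by exact_mod_cast h.sum_degree_le)
  have factorial_le : (s.factorial : ℝ) ≤ Real.exp (ω * L) ^ s := by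
    calc (s.factorial : ℝ) ≤ (s : ℝ) ^ s := by exact_mod_cast Nat.factorial_le_pow s
      _ ≤ (r 0 + 1 : ℝ) ^ s := by
          gcongr
          exact_mod_cast hs
      _ ≤ Real.exp (ω * L) ^ s := by
          gcongr
          exact (Real.add_one_le_exp _).trans (Real.exp_le_exp.2 (h.degree_le 0))
  calc l1Norm (hasseWronskian I P) ≤ s.factorial * (2 ^ (∑ j, r j) * l1Norm P) ^ s :=
        _root_.l1Norm_hasseWronskian_le I hdeg
    _ ≤ Real.exp (ω * L) ^ s * (Real.exp ((n + 1) * (ω * L)) * Real.exp (ω * L)) ^ s := by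
        have := l1Norm_nonneg P
        gcongr
    _ = Real.exp ((n + 3) * ω * (s * L)) := by
        rw [← mul_pow, ← Real.exp_add, ← Real.exp_add, ← Real.exp_nat_mul]
        ring_nf

theorem IsAdmissible.weight_tail_le (h : IsAdmissible ω L r x) {K : Fin n →₀ ℕ}
    (hK : K.degree ≤ r 0) : Finsupp.weight (Fin.tail fun j => (r j : ℝ)⁻¹) K ≤ ω := by
  have r_pos (j : Fin (n + 1)) : (0 : ℝ) < r j := Nat.cast_pos.2 (h.degree_pos j)
  have inv_le (j : Fin n) : (r j.succ : ℝ)⁻¹ ≤ ω / r 0 := by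
    rw [inv_le_iff_one_le_mul₀ (r_pos _), div_mul_eq_mul_div, one_le_div (r_pos 0)]
    exact h.degree_le_mul_degree (Fin.succ_pos j)
  calc Finsupp.weight (Fin.tail fun j => (r j : ℝ)⁻¹) K
      = ∑ j, K j * (r j.succ : ℝ)⁻¹ := by
        simp [Finsupp.weight_apply, Finsupp.sum_fintype, Fin.tail]
    _ ≤ ∑ j, K j * (ω / r 0) := by
        gcongr with j
        exact inv_le j
    _ = K.degree * (ω / r 0) := by rw [← Finset.sum_mul, Finsupp.degree_eq_sum, Nat.cast_sum]
    _ ≤ r 0 * (ω / r 0) := by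
        gcongr
        exact div_nonneg (h.nonneg 0) (r_pos 0).le
    _ = ω := mul_div_cancel₀ _ (r_pos 0).ne'

theorem le_sum_max_zero_sub {d : ℕ} (hs : s ≤ d + 1) (hd : 0 < d) (hε : 0 < ε) (hε1 : ε ≤ 1)
    (hη : η ≤ ε / 4) :
    s * (ε ^ 2 / 16) ≤ ∑ j : Fin s, max 0 (ε - η - j * (d : ℝ)⁻¹) := by
  have d_pos : (0 : ℝ) < d := Nat.cast_pos.2 hd
  have s_le : (s : ℝ) ≤ 2 * d := by exact_mod_cast (show s ≤ 2 * d by omega)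
  let M := ⌈ε * s / 4⌉₊
  have M_le : M ≤ s := Nat.ceil_le.2 (by nlinarith [s.cast_nonneg (α := ℝ)])
  have term_ge {j : ℕ} (hj : j < M) : ε / 4 ≤ max 0 (ε - η - j * (d : ℝ)⁻¹) := by
    have j_le : j * (d : ℝ)⁻¹ ≤ ε / 2 := by
      rw [← div_eq_mul_inv, div_le_iff₀ d_pos]
      nlinarith [Nat.lt_ceil.1 hj]
    exact le_max_of_le_right (by linarith)
  calc s * (ε ^ 2 / 16) = ε * s / 4 * (ε / 4) := by ring
    _ ≤ M * (ε / 4) := by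
        gcongr
        exact Nat.le_ceil _
    _ = ∑ j ∈ Finset.range M, ε / 4 := by rw [Finset.sum_const, Finset.card_range, nsmul_eq_mul]
    _ ≤ ∑ j ∈ Finset.range M, max 0 (ε - η - j * (d : ℝ)⁻¹) :=
        Finset.sum_le_sum fun j hj => term_ge (Finset.mem_range.1 hj)
    _ ≤ ∑ j ∈ Finset.range s, max 0 (ε - η - j * (d : ℝ)⁻¹) :=
        Finset.sum_le_sum_of_subset_of_nonneg (Finset.range_subset_range.2 M_le)
          fun _ _ _ => le_max_left _ _
    _ = ∑ j : Fin s, max 0 (ε - η - j * (d : ℝ)⁻¹) :=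
        (Fin.sum_univ_eq_sum_range (fun j => max 0 (ε - η - j * (d : ℝ)⁻¹)) s).symm

theorem RothBound.succ {ω' : ℝ} (hroth : RothBound n (ε ^ 2 / 64) ω') (hε : 0 < ε) (hε1 : ε ≤ 1)
    (hωω' : (n + 3) * ω ≤ ω') (hωε : (n + 3) * ω ≤ ε ^ 2 / 64) : RothBound (n + 1) ε ω := by
  intro r x L P h hP hdeg hnorm hindex
  have ω_nonneg : 0 ≤ ω := h.nonneg 0
  have ω_le : ω ≤ (n + 3) * ω :=
    le_mul_of_one_le_left ω_nonneg (by linarith [n.cast_nonneg (α := ℝ)])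
  have map_ne_zero : map (Int.castRingHom ℚ) P ≠ 0 :=
    (map_ne_zero_iff _ (map_injective _ (RingHom.injective_int _))).2 hP
  have degreeOf_map_lt : (map (Int.castRingHom ℚ) P).degreeOf 0 < r 0 + 1 :=
    Nat.lt_succ_of_le <| degreeOf_le_iff.2 fun K hK =>
      degreeOf_le_iff.1 (hdeg 0) K (support_map_subset _ _ hK)
  obtain ⟨s, s_pos, hs, I, hI, Ψ, hΨ, Φ, hΦ, hsep⟩ :=
    exists_hasseWronskian_eq_sepProd map_ne_zero degreeOf_map_lt
  rw [← map_hasseWronskian] at hsep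
  refine hroth.not_hasIndexGE_of_map_eq_sepProd (h.mono (ω_le.trans hωω')) s_pos hΨ hΦ hsep
    (fun j => (degreeOf_hasseWronskian_le I P j).trans (Nat.mul_le_mul_left s (hdeg j)))
    (h.l1Norm_hasseWronskian_le hdeg hnorm hs I) (by positivity) hωω' hωε ?_
  refine (hindex.hasseWronskian (fun j => inv_nonneg.2 (Nat.cast_nonneg _)) fun i =>
    h.weight_tail_le (Nat.le_of_lt_succ ((hI i).trans_le hs))).mono ?_
  have sum_ge := le_sum_max_zero_sub hs (h.degree_pos 0) hε hε1 (η := ω) (by nlinarith)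
  linarith [mul_nonneg s.cast_nonneg (sq_nonneg ε)]

theorem exists_rothBound (m : ℕ) : ∀ ε > 0, ∃ ω > 0, RothBound m ε ω := by
  induction m with
  | zero => exact fun ε hε => ⟨1, one_pos, rothBound_zero hε⟩
  | succ n ih =>
    intro ε hε
    have ε'_pos : 0 < min ε 1 := lt_min hε one_pos
    obtain ⟨ω', ω'_pos, hroth⟩ := ih (min ε 1 ^ 2 / 64) (by positivity)
    let ω := min ω' (min ε 1 ^ 2 / 64) / (n + 3)
    have mul_ω : (n + 3) * ω = min ω' (min ε 1 ^ 2 / 64) := mul_div_cancel₀ _ (by positivity)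
    refine ⟨ω, by positivity, fun r x L P h hP hdeg hnorm hindex => ?_⟩
    exact hroth.succ ε'_pos (min_le_right _ _) (mul_ω.trans_le (min_le_left _ _))
      (mul_ω.trans_le (min_le_right _ _)) h hP hdeg hnorm (hindex.mono (min_le_left _ _))

end RothLemma

section AuxiliaryPolynomial

theorem exists_pow_eq_sum_smul_of_mul_eq_sum_smul {ι A : Type*} [Fintype ι] [CommRing A] {α : A}
    {v : ι → A} {M : ι → ι → ℤ} {B : ℝ} (hM : ∀ i, ∑ j, M i j • v j = α * v i)
    (hB : ∀ j, ∑ i, ‖M i j‖ ≤ B) {i₀ : ι} (hv : v i₀ = 1) (k : ℕ) :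
    ∃ c : ι → ℤ, α ^ k = ∑ i, c i • v i ∧ ∀ i, ‖c i‖ ≤ B ^ k := by
  classical
  induction k with
  | zero => exact ⟨Pi.single i₀ 1, by simp [Pi.single_apply, hv], fun i => by
      rw [Pi.single_apply]; split_ifs <;> simp⟩
  | succ k ih =>
    obtain ⟨c, hc, hcB⟩ := ih
    have B_nonneg : 0 ≤ B := (Finset.sum_nonneg fun _ _ => norm_nonneg _).trans (hB i₀)
    refine ⟨fun j => ∑ i, c i * M i j, ?_, fun j => ?_⟩
    · simp only [pow_succ', hc, Finset.mul_sum, mul_smul_comm, ← hM, Finset.smul_sum, smul_smul,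
        Finset.sum_smul]
      exact Finset.sum_comm
    · calc ‖∑ i, c i * M i j‖ ≤ ∑ i, B ^ k * ‖M i j‖ := norm_sum_le_of_le _ fun i _ =>
            (norm_mul_le _ _).trans (mul_le_mul_of_nonneg_right (hcB i) (norm_nonneg _))
        _ ≤ B ^ (k + 1) := by
          rw [← Finset.mul_sum, pow_succ]
          exact mul_le_mul_of_nonneg_left (hB j) (pow_nonneg B_nonneg k)

theorem exists_finset_one_mem_mul_eq_sum_smul_of_isIntegral {A : Type*} [CommRing A] {α : A}
    (hα : IsIntegral ℤ α) :
    ∃ S : Finset A, 1 ∈ S ∧ ∃ M : S → S → ℤ, ∀ i, ∑ j, M i j • (j : A) = α * i := by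
  classical
  obtain ⟨S₀, hS₀⟩ := hα.fg_adjoin_singleton
  set S := insert 1 S₀
  have span_S : Submodule.span ℤ (Set.range ((↑) : S → A)) =
      Subalgebra.toSubmodule (Algebra.adjoin ℤ {α}) := by
    rw [Subtype.range_coe_subtype, Finset.setOfPred_mem, Finset.coe_insert,
      Submodule.span_insert, hS₀, sup_eq_right, Submodule.span_singleton_le_iff_mem]
    exact one_mem (Algebra.adjoin ℤ {α})
  have exists_coords (i : S) : ∃ f : S → ℤ, ∑ j, f j • (j : A) = α * i := by
    rw [← Submodule.mem_span_range_iff_exists_fun, span_S]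
    have mem_adjoin : (i : A) ∈ Algebra.adjoin ℤ {α} := by
      rw [← Subalgebra.mem_toSubmodule, ← span_S]
      exact Submodule.subset_span ⟨i, rfl⟩
    exact (Algebra.adjoin ℤ {α}).mul_mem (Algebra.self_mem_adjoin_singleton ℤ α) mem_adjoin
  choose M hM using exists_coords
  exact ⟨S, Finset.mem_insert_self 1 S₀, M, hM⟩

theorem exists_pow_eq_sum_smul_of_isIntegral {A : Type*} [CommRing A] {α : A}
    (hα : IsIntegral ℤ α) :
    ∃ (S : Finset A) (c : ℕ → S → ℤ) (B : ℝ), S.Nonempty ∧ 1 ≤ B ∧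
      (∀ k, α ^ k = ∑ i, c k i • (i : A)) ∧ ∀ k i, ‖c k i‖ ≤ B ^ k := by
  obtain ⟨S, one_mem, M, hM⟩ := exists_finset_one_mem_mul_eq_sum_smul_of_isIntegral hα
  set B : ℝ := 1 + ∑ i, ∑ j, ‖M i j‖
  have sum_le (j : S) : ∑ i, ‖M i j‖ ≤ B :=
    (Finset.sum_le_sum fun i _ => Finset.single_le_sum (f := fun j => ‖M i j‖)
      (fun _ _ => norm_nonneg _) (Finset.mem_univ j)).trans (le_add_of_nonneg_left zero_le_one)
  choose c hc hcB using
    exists_pow_eq_sum_smul_of_mul_eq_sum_smul hM sum_le (i₀ := ⟨1, one_mem⟩) rfl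
  exact ⟨S, c, B, ⟨1, one_mem⟩, le_add_of_nonneg_right (by positivity), hc, hcB⟩

theorem sum_Iic_prod_eq_prod_sum {σ R : Type*} [Fintype σ] [DecidableEq σ] [CommSemiring R]
    (r : σ →₀ ℕ) (f : σ → ℕ → R) :
    ∑ K ∈ Finset.Iic r, ∏ j, f j (K j) = ∏ j, ∑ k ∈ Finset.range (r j + 1), f j k := by
  rw [Finset.prod_univ_sum]
  refine Finset.sum_equiv Finsupp.equivFunOnFinite (fun K => ?_) fun K _ => rfl
  simp only [Finset.mem_Iic, Finsupp.le_def, Fintype.mem_piFinset, Finset.mem_range,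
    Order.lt_add_one_iff, Finsupp.equivFunOnFinite_apply]

theorem card_Iic_eq_prod {σ : Type*} [Fintype σ] [DecidableEq σ] (r : σ →₀ ℕ) :
    (Finset.Iic r).card = ∏ j, (r j + 1) := by
  simpa using sum_Iic_prod_eq_prod_sum (R := ℕ) r fun _ _ => 1

theorem card_Iic_le_two_pow {σ : Type*} [Fintype σ] [DecidableEq σ] (r : σ →₀ ℕ) :
    (Finset.Iic r).card ≤ 2 ^ ∑ j, r j := by
  rw [card_Iic_eq_prod, ← Finset.prod_pow_eq_pow_sum]
  exact Finset.prod_le_prod' fun j _ => Nat.lt_two_pow_self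

theorem sum_range_exp_le {r : ℕ} (hr : 0 < r) (s : ℝ) :
    ∑ k ∈ Finset.range (r + 1), Real.exp (s * (1 / 2 - k / r)) ≤
      (r + 1) * Real.exp (s ^ 2 / 8) := by
  have hr' : (0 : ℝ) < r := Nat.cast_pos.2 hr
  have reflect : ∑ k ∈ Finset.range (r + 1), Real.exp (-(s * (1 / 2 - k / r))) =
      ∑ k ∈ Finset.range (r + 1), Real.exp (s * (1 / 2 - k / r)) := by
    rw [← Finset.sum_range_reflect]
    refine Finset.sum_congr rfl fun k hk => ?_
    rw [Nat.add_sub_cancel, Nat.cast_sub (Finset.mem_range_succ_iff.1 hk)]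
    congr 1
    field_simp
    ring
  have cosh_le : ∀ k ∈ Finset.range (r + 1),
      Real.cosh (s * (1 / 2 - k / r)) ≤ Real.exp (s ^ 2 / 8) := by
    intro k hk
    refine (Real.cosh_le_exp_half_sq _).trans (Real.exp_le_exp.2 ?_)
    have nonneg : 0 ≤ (k : ℝ) / r := by positivity
    have le_one : (k : ℝ) / r ≤ 1 :=
      div_le_one_of_le₀ (Nat.cast_le.2 (Finset.mem_range_succ_iff.1 hk)) hr'.le
    have sq_le : (1 / 2 - (k : ℝ) / r) ^ 2 ≤ 1 / 4 := by nlinarith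
    rw [mul_pow]
    nlinarith [sq_nonneg s]
  calc ∑ k ∈ Finset.range (r + 1), Real.exp (s * (1 / 2 - k / r))
      = ∑ k ∈ Finset.range (r + 1), Real.cosh (s * (1 / 2 - k / r)) := by
        simp_rw [Real.cosh_eq]
        rw [← Finset.sum_div, Finset.sum_add_distrib, reflect, add_self_div_two]
    _ ≤ (r + 1) * Real.exp (s ^ 2 / 8) := by simpa using Finset.sum_le_sum cosh_le

-- Chernoff's method: each coordinate contributes a factor `exp (s * (1 / 2 - I j / r j))` with
-- `s = 4 * δ`.
theorem card_weight_lt_le {σ : Type*} [Fintype σ] [DecidableEq σ] {r : σ →₀ ℕ}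
    (hr : ∀ j, 0 < r j) {δ : ℝ} (hδ : 0 ≤ δ) :
    (({I ∈ Finset.Iic r | Finsupp.weight (fun j => (r j : ℝ)⁻¹) I <
      Fintype.card σ * (1 / 2 - δ)} : Finset _).card : ℝ) ≤
      (Finset.Iic r).card * Real.exp (-2 * δ ^ 2 * Fintype.card σ) := by
  set m := (Fintype.card σ : ℝ)
  set S : Finset (σ →₀ ℕ) :=
    {I ∈ Finset.Iic r | Finsupp.weight (fun j => (r j : ℝ)⁻¹) I < m * (1 / 2 - δ)}
  have one_le : ∀ I ∈ S,
      Real.exp (4 * δ ^ 2 * m) ≤ ∏ j, Real.exp (4 * δ * (1 / 2 - I j / r j)) := by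
    intro I hI
    have weight_lt := (Finset.mem_filter.1 hI).2
    rw [Finsupp.weight_apply, Finsupp.sum_fintype _ _ (by simp)] at weight_lt
    simp only [nsmul_eq_mul, ← div_eq_mul_inv] at weight_lt
    rw [← Real.exp_sum, ← Finset.mul_sum, Finset.sum_sub_distrib, Finset.sum_const,
      Finset.card_univ, nsmul_eq_mul, Real.exp_le_exp]
    nlinarith
  have card_mul_le : S.card * Real.exp (4 * δ ^ 2 * m) ≤
      (Finset.Iic r).card * Real.exp (m * ((4 * δ) ^ 2 / 8)) :=
    calc S.card * Real.exp (4 * δ ^ 2 * m)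
        ≤ ∑ I ∈ S, ∏ j, Real.exp (4 * δ * (1 / 2 - I j / r j)) := by
          simpa using Finset.card_nsmul_le_sum S _ _ one_le
      _ ≤ ∑ I ∈ Finset.Iic r, ∏ j, Real.exp (4 * δ * (1 / 2 - I j / r j)) :=
          Finset.sum_le_sum_of_subset_of_nonneg (Finset.filter_subset _ _) fun _ _ _ =>
            Finset.prod_nonneg fun _ _ => (Real.exp_pos _).le
      _ ≤ ∏ j, ((r j + 1) * Real.exp ((4 * δ) ^ 2 / 8)) := by
          rw [sum_Iic_prod_eq_prod_sum r fun j k => Real.exp (4 * δ * (1 / 2 - k / r j))]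
          exact Finset.prod_le_prod (fun j _ => by positivity) fun j _ =>
            sum_range_exp_le (hr j) _
      _ = (Finset.Iic r).card * Real.exp (m * ((4 * δ) ^ 2 / 8)) := by
          rw [Finset.prod_mul_distrib, Finset.prod_const, Finset.card_univ, ← Real.exp_nat_mul,
            card_Iic_eq_prod]
          push_cast
          rfl
  rw [← le_div_iff₀ (Real.exp_pos _), mul_div_assoc, ← Real.exp_sub] at card_mul_le
  have exponent_eq : m * ((4 * δ) ^ 2 / 8) - 4 * δ ^ 2 * m = -2 * δ ^ 2 * m := by ring
  rwa [exponent_eq] at card_mul_le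

theorem exists_ne_zero_mulVec_eq_zero_norm_le {ι κ : Type*} [Fintype ι] [Nonempty ι] [Fintype κ]
    (M : Matrix ι κ ℤ) {B : ℝ} (hB : 1 ≤ B) (hM : ∀ i j, ‖M i j‖ ≤ B)
    (hcard : 2 * Fintype.card ι ≤ Fintype.card κ) :
    ∃ t : κ → ℤ, t ≠ 0 ∧ M.mulVec t = 0 ∧ ∀ j, ‖t j‖ ≤ Fintype.card κ * B := by
  let : NormedAddCommGroup (Matrix ι κ ℤ) := Matrix.normedAddCommGroup
  have card_pos : 0 < Fintype.card ι := Fintype.card_pos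
  obtain ⟨t, t_ne_zero, ht, norm_t⟩ :=
    Int.Matrix.exists_ne_zero_int_vec_norm_le M (by lia) card_pos
  refine ⟨t, t_ne_zero, ht, fun j => (norm_le_pi_norm t j).trans (norm_t.trans ?_)⟩
  have card_le : (2 : ℝ) * Fintype.card ι ≤ Fintype.card κ := by exact_mod_cast hcard
  have one_le_card : (1 : ℝ) ≤ Fintype.card ι := by exact_mod_cast card_pos
  have one_le : 1 ≤ Fintype.card κ * max 1 ‖M‖ :=
    one_le_mul_of_one_le_of_one_le (by linarith) (le_max_left _ _)
  calc _ ≤ (Fintype.card κ * max 1 ‖M‖) ^ (1 : ℝ) :=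
        Real.rpow_le_rpow_of_exponent_le one_le (by rw [div_le_one] <;> linarith)
    _ ≤ Fintype.card κ * B := by
        rw [Real.rpow_one]
        gcongr
        exact max_le hB ((Matrix.norm_le_iff (by linarith)).2 hM)

theorem exists_ne_zero_support_subset_l1Norm_le {σ ι : Type*} [Fintype ι] [Nonempty ι]
    {V : Finset (σ →₀ ℕ)} (M : ι → (σ →₀ ℕ) → ℤ) {B : ℝ} (hB : 1 ≤ B)
    (hM : ∀ i, ∀ K ∈ V, ‖M i K‖ ≤ B) (hcard : 2 * Fintype.card ι ≤ V.card) :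
    ∃ P : MvPolynomial σ ℤ, P ≠ 0 ∧ P.support ⊆ V ∧ l1Norm P ≤ V.card ^ 2 * B ∧
      ∀ i, ∑ K ∈ V, M i K * coeff K P = 0 := by
  classical
  obtain ⟨t, t_ne_zero, ht, norm_t⟩ := exists_ne_zero_mulVec_eq_zero_norm_le
    (Matrix.of fun i (K : V) => M i K) hB (fun i K => hM i K K.2) (by simpa using hcard)
  set P : MvPolynomial σ ℤ := ∑ K : V, monomial (K : σ →₀ ℕ) (t K)
  have coeff_P (K : V) : coeff (K : σ →₀ ℕ) P = t K := by
    simp [P, coeff_sum, coeff_monomial]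
  have support_P : P.support ⊆ V := by
    refine support_sum.trans (Finset.biUnion_subset.2 fun K _ => ?_)
    exact support_monomial_subset.trans (Finset.singleton_subset_iff.2 K.2)
  refine ⟨P, fun hP => t_ne_zero (funext fun K => ?_), support_P, ?_, fun i => ?_⟩
  · rw [← coeff_P, hP, coeff_zero, Pi.zero_apply]
  · rw [l1Norm_eq_sum support_P, ← Finset.sum_coe_sort]
    simp only [coeff_P]
    refine (Finset.sum_le_card_nsmul _ _ _ fun K _ => norm_t K).trans_eq ?_
    simp only [Finset.card_univ, Fintype.card_coe, nsmul_eq_mul]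
    ring
  · rw [← Finset.sum_coe_sort]
    simp only [coeff_P]
    exact congr_fun ht i

theorem aeval_mvHasseDeriv {σ R A : Type*} [Fintype σ] [CommSemiring R] [CommSemiring A]
    [Algebra R A] (α : A) {V : Finset (σ →₀ ℕ)} {P : MvPolynomial σ R} (hV : P.support ⊆ V)
    (I : σ →₀ ℕ) :
    aeval (fun _ => α) (mvHasseDeriv I P) =
      ∑ K ∈ V, (coeff K P * ∏ j, ((K j).choose (I j) : R)) • α ^ ∑ j, (K j - I j) := by
  have sum_eq : P = ∑ K ∈ V, monomial K (coeff K P) := by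
    conv_lhs => rw [P.as_sum]
    exact Finset.sum_subset hV fun K _ hK => by rw [notMem_support_iff.1 hK, map_zero]
  conv_lhs => rw [sum_eq]
  simp only [map_sum, mvHasseDeriv_monomial, aeval_monomial, Algebra.smul_def]
  refine Finset.sum_congr rfl fun K _ => ?_
  rw [Finsupp.prod_fintype _ _ (by simp), Finset.prod_pow_eq_pow_sum]
  rfl

theorem exists_aeval_mvHasseDeriv_eq_zero {σ ι A : Type*} [Fintype σ] [DecidableEq σ]
    [Fintype ι] [Nonempty ι] [CommRing A] {α : A} {v : ι → A} {c : ℕ → ι → ℤ} {B : ℝ} (hB : 1 ≤ B)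
    (hpow : ∀ k, α ^ k = ∑ i, c k i • v i) (hc : ∀ k i, ‖c k i‖ ≤ B ^ k) {r : σ →₀ ℕ}
    {E : Finset (σ →₀ ℕ)} (hE : E.Nonempty)
    (hcard : 2 * (E.card * Fintype.card ι) ≤ (Finset.Iic r).card) :
    ∃ P : MvPolynomial σ ℤ, P ≠ 0 ∧ (∀ j, degreeOf j P ≤ r j) ∧ l1Norm P ≤ (8 * B) ^ ∑ j, r j ∧
      ∀ I ∈ E, aeval (fun _ => α) (mvHasseDeriv I P) = 0 := by
  have := hE.coe_sort
  set M : E × ι → (σ →₀ ℕ) → ℤ := fun e K =>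
    (∏ j, ((K j).choose (e.1.1 j) : ℤ)) * c (∑ j, (K j - e.1.1 j)) e.2
  have norm_M_le : ∀ e, ∀ K ∈ Finset.Iic r, ‖M e K‖ ≤ (2 * B) ^ ∑ j, r j := by
    rintro ⟨⟨I, _⟩, i⟩ K hK
    rw [Finset.mem_Iic, Finsupp.le_def] at hK
    rw [norm_mul, mul_pow, norm_prod, ← Finset.prod_pow_eq_pow_sum (a := (2 : ℝ))]
    gcongr with j
    · have choose_le : (K j).choose (I j) ≤ 2 ^ r j :=
        (Nat.choose_le_two_pow _ _).trans (Nat.pow_le_pow_right two_pos (hK j))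
      rw [Int.norm_natCast]
      exact_mod_cast choose_le
    · exact (hc _ _).trans (pow_le_pow_right₀ hB (Finset.sum_le_sum fun j _ =>
        (Nat.sub_le _ _).trans (hK j)))
  obtain ⟨P, P_ne_zero, support_P, l1Norm_P, hP⟩ := exists_ne_zero_support_subset_l1Norm_le M
    (one_le_pow₀ (by linarith)) norm_M_le (by simpa using hcard)
  refine ⟨P, P_ne_zero, fun j => degreeOf_le_iff.2 fun K hK => ?_, l1Norm_P.trans ?_,
    fun I hI => ?_⟩
  · exact Finsupp.le_def.1 (Finset.mem_Iic.1 (support_P hK)) j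
  · calc ((Finset.Iic r).card : ℝ) ^ 2 * (2 * B) ^ ∑ j, r j
        ≤ (2 ^ ∑ j, r j) ^ 2 * (2 * B) ^ ∑ j, r j := by
          gcongr
          exact_mod_cast card_Iic_le_two_pow r
      _ = (8 * B) ^ ∑ j, r j := by
          rw [← pow_mul, mul_comm _ 2, pow_mul, ← mul_pow]
          ring
  · calc aeval (fun _ => α) (mvHasseDeriv I P)
        = ∑ i, (∑ K ∈ Finset.Iic r, M (⟨I, hI⟩, i) K * coeff K P) • v i := by
          rw [aeval_mvHasseDeriv α support_P]
          simp only [hpow, Finset.smul_sum, Finset.sum_smul, smul_smul, M]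
          rw [Finset.sum_comm]
          refine Finset.sum_congr rfl fun i _ => Finset.sum_congr rfl fun K _ => ?_
          congr 1
          ring
      _ = 0 := by simp only [hP, zero_smul, Finset.sum_const_zero]

theorem mvHasseDeriv_eq_zero_of_degreeOf_lt {σ R : Type*} [Finite σ] [CommSemiring R]
    {P : MvPolynomial σ R} {I : σ →₀ ℕ} {j : σ} (hj : degreeOf j P < I j) :
    mvHasseDeriv I P = 0 := by
  cases nonempty_fintype σ
  ext K
  rw [coeff_mvHasseDeriv, coeff_zero]
  have coeff_eq_zero : coeff (K + I) P = 0 := by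
    by_contra hne
    have := monomial_le_degreeOf j (mem_support_iff.2 hne)
    rw [Finsupp.add_apply] at this
    lia
  rw [coeff_eq_zero, zero_mul]

theorem exists_hasIndexGE {A : Type*} [CommRing A] {α : A} (hα : IsIntegral ℤ α) :
    ∃ d B : ℝ, 1 ≤ B ∧ ∀ (m : ℕ) (δ : ℝ), 0 < m → 0 ≤ δ → δ < 1 / 2 →
      d * Real.exp (-2 * δ ^ 2 * m) ≤ 1 / 2 → ∀ r : Fin m → ℕ, (∀ j, 0 < r j) →
      ∃ P : MvPolynomial (Fin m) ℤ, P ≠ 0 ∧ (∀ j, degreeOf j P ≤ r j) ∧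
        l1Norm P ≤ B ^ ∑ j, r j ∧
        HasIndexGE (fun j => (r j : ℝ)⁻¹) (fun _ => α) (m * (1 / 2 - δ)) P := by
  obtain ⟨S, c, B, hS, hB, hpow, hc⟩ := exists_pow_eq_sum_smul_of_isIntegral hα
  have := hS.coe_sort
  refine ⟨S.card, 8 * B, by linarith, fun m δ hm hδ hδ' hd r hr => ?_⟩
  set R : Fin m →₀ ℕ := Finsupp.equivFunOnFinite.symm r
  set w : Fin m → ℝ := fun j => (r j : ℝ)⁻¹
  set E : Finset (Fin m →₀ ℕ) := {I ∈ Finset.Iic R | Finsupp.weight w I < m * (1 / 2 - δ)}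
  have zero_mem : 0 ∈ E := by
    refine Finset.mem_filter.2 ⟨Finset.mem_Iic.2 zero_le, ?_⟩
    rw [map_zero]
    exact mul_pos (Nat.cast_pos.2 hm) (by linarith)
  have card_le : 2 * (E.card * S.card) ≤ (Finset.Iic R).card := by
    have card_E : (E.card : ℝ) ≤ (Finset.Iic R).card * Real.exp (-2 * δ ^ 2 * m) := by
      have := card_weight_lt_le (r := R) hr hδ
      rwa [Fintype.card_fin] at this
    have : (2 * (E.card * S.card) : ℝ) ≤ (Finset.Iic R).card := by
      calc (2 * (E.card * S.card) : ℝ)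
          ≤ 2 * ((Finset.Iic R).card * Real.exp (-2 * δ ^ 2 * m) * S.card) := by gcongr
        _ = (Finset.Iic R).card * (2 * (S.card * Real.exp (-2 * δ ^ 2 * m))) := by ring
        _ ≤ (Finset.Iic R).card :=
          mul_le_of_le_one_right (Nat.cast_nonneg _) (by linarith)
    exact_mod_cast this
  obtain ⟨P, P_ne_zero, degree_P, l1Norm_P, hP⟩ := exists_aeval_mvHasseDeriv_eq_zero hB hpow hc
    ⟨0, zero_mem⟩ (by simpa using card_le)
  refine ⟨P, P_ne_zero, degree_P, l1Norm_P, fun I hI => not_lt.1 fun weight_lt => hI ?_⟩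
  by_cases hIR : I ∈ Finset.Iic R
  · exact hP I (Finset.mem_filter.2 ⟨hIR, weight_lt⟩)
  · simp only [Finset.mem_Iic, Finsupp.le_def, not_forall, not_le] at hIR
    obtain ⟨j, hj⟩ := hIR
    rw [mvHasseDeriv_eq_zero_of_degreeOf_lt ((degree_P j).trans_lt hj), map_zero]

end AuxiliaryPolynomial

section RothTheorem

theorem norm_aeval_le_l1Norm_mul {σ A : Type*} [Fintype σ] [NormedCommRing A] [NormOneClass A]
    {P : MvPolynomial σ A} {z : σ → A} {M : ℝ} (hM : ∀ K ∈ P.support, ∏ j, ‖z j‖ ^ K j ≤ M) :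
    ‖aeval z P‖ ≤ l1Norm P * M := by
  rw [aeval_def, eval₂_eq', l1Norm, Finset.sum_mul]
  refine norm_sum_le_of_le _ fun K hK => (norm_mul_le _ _).trans ?_
  refine mul_le_mul_of_nonneg_left ((Finset.norm_prod_le _ _).trans ?_) (norm_nonneg _)
  exact (Finset.prod_le_prod (fun _ _ => norm_nonneg _) fun j _ => norm_pow_le _ _).trans (hM K hK)

theorem abs_aeval_le_of_hasIndexGE {σ : Type*} [Finite σ] {P : MvPolynomial σ ℤ}
    {w α ξ : σ → ℝ} {θ h : ℝ} (hP : HasIndexGE w α θ P) (hh : 0 ≤ h)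
    (hξ : ∀ j, |ξ j - α j| ≤ Real.exp (-(h * w j))) :
    |aeval ξ P| ≤ l1Norm (mvTaylor α P) * Real.exp (-(h * θ)) := by
  cases nonempty_fintype σ
  rw [← aeval_sub_mvTaylor α ξ, ← Real.norm_eq_abs]
  refine norm_aeval_le_l1Norm_mul (A := ℝ) fun K hK => ?_
  rw [mem_support_iff, coeff_mvTaylor] at hK
  have weight_ge := hP K hK
  rw [Finsupp.weight_apply, Finsupp.sum_fintype _ _ (by simp)] at weight_ge
  calc ∏ j, |ξ j - α j| ^ K j ≤ ∏ j, Real.exp (-(h * w j)) ^ K j :=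
        Finset.prod_le_prod (fun _ _ => by positivity) fun j _ =>
          pow_le_pow_left₀ (abs_nonneg _) (hξ j) _
    _ = Real.exp (-(h * ∑ j, K j • w j)) := by
        simp only [← Real.exp_nat_mul, ← Real.exp_sum, Finset.mul_sum, ← Finset.sum_neg_distrib,
          nsmul_eq_mul]
        congr 1
        exact Finset.sum_congr rfl fun j _ => by ring
    _ ≤ Real.exp (-(h * θ)) :=
        Real.exp_le_exp.2 (neg_le_neg (mul_le_mul_of_nonneg_left weight_ge hh))

variable {σ : Type*} [Fintype σ]

theorem one_le_abs_aeval_mul_prod_den_pow {P : MvPolynomial σ ℤ} {r : σ → ℕ}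
    (hr : ∀ j, P.degreeOf j ≤ r j) {x : σ → ℚ} (hP : aeval x P ≠ 0) :
    1 ≤ |aeval x P| * ∏ j, ((x j).den : ℚ) ^ r j := by
  have den_pos : 0 < ∏ j, ((x j).den : ℚ) ^ r j :=
    Finset.prod_pos fun j _ => pow_pos (Nat.cast_pos.2 (x j).pos) _
  obtain ⟨N, hN⟩ : ∃ N : ℤ, aeval x P * ∏ j, ((x j).den : ℚ) ^ r j = N := by
    refine ⟨∑ K ∈ P.support, coeff K P * ∏ j, ((x j).num ^ K j * (x j).den ^ (r j - K j)), ?_⟩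
    rw [aeval_def, eval₂_eq', Finset.sum_mul]
    push_cast
    refine Finset.sum_congr rfl fun K hK => ?_
    rw [mul_assoc, ← Finset.prod_mul_distrib, eq_intCast]
    congr 1
    refine Finset.prod_congr rfl fun j _ => ?_
    rw [← Rat.mul_den_eq_num, mul_pow, mul_assoc, ← pow_add,
      Nat.add_sub_cancel' ((monomial_le_degreeOf j hK).trans (hr j))]
  have N_ne_zero : N ≠ 0 := by
    rintro rfl
    exact mul_ne_zero hP den_pos.ne' (hN.trans Int.cast_zero)
  rw [← abs_of_pos den_pos, ← abs_mul, hN, ← Int.cast_abs]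
  exact_mod_cast Int.one_le_abs N_ne_zero

theorem log_prod_den_pow (x : σ → ℚ) (r : σ → ℕ) :
    Real.log (∏ j, ((x j).den : ℝ) ^ r j) = ∑ j, r j * Real.log (x j).den := by
  rw [Real.log_prod fun j _ => pow_ne_zero _ (Nat.cast_ne_zero.2 (x j).den_nz)]
  exact Finset.sum_congr rfl fun j _ => Real.log_pow _ _

theorem l1Norm_mvTaylor_mvHasseDeriv_le {P : MvPolynomial σ ℤ} {r : σ → ℕ}
    (hr : ∀ j, P.degreeOf j ≤ r j) {B : ℝ} (hPB : l1Norm P ≤ B ^ ∑ j, r j) (α : ℝ)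
    (I : σ →₀ ℕ) :
    l1Norm (mvTaylor (fun _ => α) (mvHasseDeriv I P)) ≤ ((1 + |α|) * 2 * B) ^ ∑ j, r j :=
  calc l1Norm (mvTaylor (fun _ => α) (mvHasseDeriv I P))
      ≤ (1 + |α|) ^ (∑ j, r j) * l1Norm (mvHasseDeriv I P) :=
        l1Norm_mvTaylor_le (fun _ => le_rfl) (abs_nonneg α)
          fun j => (degreeOf_mvHasseDeriv_le I P j).trans (hr j)
    _ ≤ (1 + |α|) ^ (∑ j, r j) * (2 ^ (∑ j, r j) * B ^ ∑ j, r j) := by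
        gcongr
        exact (l1Norm_mvHasseDeriv_le I hr).trans (by gcongr)
    _ = ((1 + |α|) * 2 * B) ^ ∑ j, r j := by rw [← mul_pow, ← mul_pow, ← mul_assoc]

-- A derivative of `P` that does not vanish at `x` still has large index at `α`, so its value at
-- `x` is small by Taylor expansion, but not smaller than the inverse of its denominator.
theorem mul_sub_le_of_hasIndexGE {P : MvPolynomial σ ℤ} {r : σ → ℕ}
    (hr : ∀ j, P.degreeOf j ≤ r j) {w : σ → ℝ} {B α θ τ h : ℝ} (hB : 1 ≤ B)
    (hPB : l1Norm P ≤ B ^ ∑ j, r j) (hh : 0 ≤ h) (hα : HasIndexGE w (fun _ => α) θ P)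
    {x : σ → ℚ} (hx : ¬ HasIndexGE w x τ P) (hxα : ∀ j, |α - x j| ≤ Real.exp (-(h * w j))) :
    h * (θ - τ) ≤ (∑ j, r j : ℕ) * Real.log ((1 + |α|) * 2 * B) +
      ∑ j, r j * Real.log (x j).den := by
  obtain ⟨I, hI, weight_lt⟩ : ∃ I, aeval x (mvHasseDeriv I P) ≠ 0 ∧ Finsupp.weight w I < τ := by
    simpa [HasIndexGE] using hx
  set Q := mvHasseDeriv I P
  set C := (1 + |α|) * 2 * B
  have C_pos : 0 < C := by positivity
  have degree_Q (j : σ) : Q.degreeOf j ≤ r j := (degreeOf_mvHasseDeriv_le I P j).trans (hr j)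
  have index_Q : HasIndexGE w (fun _ => α) (θ - τ) Q := (hα.mvHasseDeriv I).mono (by linarith)
  have upper : |((aeval x Q : ℚ) : ℝ)| ≤ C ^ (∑ j, r j) * Real.exp (-(h * (θ - τ))) := by
    have aeval_cast : ((aeval x Q : ℚ) : ℝ) = aeval (fun j => (x j : ℝ)) Q :=
      (aeval_algebraMap_apply ℝ x Q).symm
    rw [aeval_cast]
    exact (abs_aeval_le_of_hasIndexGE index_Q hh fun j => abs_sub_comm α (x j) ▸ hxα j).trans
      (mul_le_mul_of_nonneg_right (l1Norm_mvTaylor_mvHasseDeriv_le hr hPB α I) (Real.exp_pos _).le)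
  have lower : 1 ≤ |((aeval x Q : ℚ) : ℝ)| * ∏ j, ((x j).den : ℝ) ^ r j := by
    exact_mod_cast one_le_abs_aeval_mul_prod_den_pow degree_Q hI
  have prod_pos : 0 < ∏ j, ((x j).den : ℝ) ^ r j :=
    Finset.prod_pos fun j _ => pow_pos (Nat.cast_pos.2 (x j).pos) _
  have log_nonneg := Real.log_nonneg (lower.trans (mul_le_mul_of_nonneg_right upper prod_pos.le))
  rw [Real.log_mul (mul_pos (pow_pos C_pos _) (Real.exp_pos _)).ne' prod_pos.ne',
    Real.log_mul (pow_pos C_pos _).ne' (Real.exp_pos _).ne', Real.log_pow, Real.log_exp,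
    log_prod_den_pow] at log_nonneg
  linarith

theorem exists_seq_den_of_unbounded {S : Set ℚ} (hS : ∀ T : ℝ, ∃ x ∈ S, T ≤ Real.log x.den)
    (T Λ : ℝ) :
    ∃ y : ℕ → ℚ, (∀ k, y k ∈ S ∧ T ≤ Real.log (y k).den) ∧
      ∀ k l, k < l → Λ * Real.log (y k).den ≤ Real.log (y l).den := by
  refine exists_seq_of_forall_finset_exists (fun x : ℚ => x ∈ S ∧ T ≤ Real.log x.den)
    (fun x y => Λ * Real.log x.den ≤ Real.log y.den) fun F _ => ?_
  obtain ⟨U, hU⟩ := (F.image fun x : ℚ => Λ * Real.log x.den).exists_le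
  obtain ⟨y, hyS, hy⟩ := hS (max T U)
  exact ⟨y, ⟨hyS, (le_max_left _ _).trans hy⟩, fun x hx =>
    (hU _ (Finset.mem_image_of_mem _ hx)).trans ((le_max_right _ _).trans hy)⟩

theorem exists_isAdmissible {S : Set ℚ} (hS : ∀ T : ℝ, ∃ x ∈ S, T ≤ Real.log x.den) (m : ℕ)
    {ω η : ℝ} (hω : 0 < ω) (hη : 0 < η) (hη1 : η ≤ 1) :
    ∃ (r : Fin m → ℕ) (x : Fin m → ℚ) (L : ℝ), IsAdmissible ω L r x ∧ (∀ j, x j ∈ S) ∧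
      ∀ j, r j * Real.log (x j).den ≤ (1 + η) * L := by
  obtain ⟨y, hy, hgap⟩ := exists_seq_den_of_unbounded hS (2 / ω) (2 / ω)
  set x : Fin m → ℚ := fun j => y j.rev
  set l : Fin m → ℝ := fun j => Real.log (x j).den
  have l_ge (j : Fin m) : 2 / ω ≤ l j := (hy _).2
  have l_pos (j : Fin m) : 0 < l j := (by positivity : 0 < 2 / ω).trans_le (l_ge j)
  set L : ℝ := (1 + ∑ j, l j) / η
  have L_pos : 0 < L :=
    div_pos (add_pos_of_pos_of_nonneg one_pos (Finset.sum_nonneg fun j _ => (l_pos j).le)) hη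
  have l_le (j : Fin m) : l j ≤ η * L := by
    rw [mul_div_cancel₀ _ hη.ne']
    exact (Finset.single_le_sum (fun j _ => (l_pos j).le) (Finset.mem_univ j)).trans
      (le_add_of_nonneg_left zero_le_one)
  set r : Fin m → ℕ := fun j => ⌈L / l j⌉₊
  have le_mul (j : Fin m) : L ≤ r j * l j := (div_le_iff₀ (l_pos j)).1 (Nat.le_ceil _)
  have mul_le (j : Fin m) : r j * l j ≤ (1 + η) * L :=
    calc r j * l j ≤ (L / l j + 1) * l j := mul_le_mul_of_nonneg_right
          (Nat.ceil_lt_add_one (div_pos L_pos (l_pos j)).le).le (l_pos j).le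
      _ = L + l j := by rw [add_mul, div_mul_cancel₀ _ (l_pos j).ne', one_mul]
      _ ≤ (1 + η) * L := by linarith [l_le j]
  have r_le (j : Fin m) : r j * l j ≤ 2 * L :=
    (mul_le j).trans (mul_le_mul_of_nonneg_right (by linarith) L_pos.le)
  have two_mul_L_le (j : Fin m) {c : ℝ} (hc : 2 / ω * c ≤ l j) : r j * c ≤ ω * L := by
    have c_le : c ≤ ω / 2 * l j := by
      rw [div_mul_eq_mul_div, div_le_iff₀ hω] at hc
      linarith
    calc r j * c ≤ r j * (ω / 2 * l j) := mul_le_mul_of_nonneg_left c_le (Nat.cast_nonneg _)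
      _ = ω / 2 * (r j * l j) := by ring
      _ ≤ ω / 2 * (2 * L) := mul_le_mul_of_nonneg_left (r_le j) (by positivity)
      _ = ω * L := by ring
  refine ⟨r, x, L, ⟨L_pos, le_mul, fun j => ?_, fun {i j} hij => ?_⟩, fun j => (hy _).1, mul_le⟩
  · simpa using two_mul_L_le j (c := 1) (by simpa using l_ge j)
  · refine le_of_mul_le_mul_right ((two_mul_L_le i (hgap _ _ ?_)).trans ?_) (l_pos j)
    · exact Fin.rev_lt_rev.2 hij
    · rw [mul_assoc]
      exact mul_le_mul_of_nonneg_left (le_mul j) hω.le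

theorem exists_pos_mul_exp_le_half (d : ℝ) {δ : ℝ} (hδ : 0 < δ) :
    ∃ m : ℕ, 0 < m ∧ d * Real.exp (-2 * δ ^ 2 * m) ≤ 1 / 2 := by
  have tendsto_zero : Filter.Tendsto (fun m : ℕ => d * Real.exp (-2 * δ ^ 2 * m))
      Filter.atTop (nhds (d * 0)) :=
    (Real.tendsto_exp_atBot.comp (tendsto_natCast_atTop_atTop.const_mul_atTop_of_neg
      (by nlinarith : -2 * δ ^ 2 < 0))).const_mul d
  rw [mul_zero] at tendsto_zero
  exact ((Filter.eventually_gt_atTop 0).and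
    (tendsto_zero.eventually (ge_mem_nhds one_half_pos))).exists

theorem add_lt_two_add_mul_sub {m ε : ℝ} (hm : 1 ≤ m) (hε : 0 < ε) (hε1 : ε ≤ 1) :
    ε / 16 + m * (1 + ε / 16) < (2 + ε) * (m * (1 / 2 - ε / 24) - ε / 24) :=
  calc ε / 16 + m * (1 + ε / 16) < m * (1 + ε / 4) := by nlinarith
    _ ≤ m * ((2 + ε) * (1 / 2 - ε / 12)) :=
        mul_le_mul_of_nonneg_left (by nlinarith) (by linarith)
    _ ≤ (2 + ε) * (m * (1 / 2 - ε / 24) - ε / 24) := by nlinarith [mul_nonneg hε.le hε.le]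

theorem exists_forall_isAdmissible_exists_lt_abs_sub {α ε : ℝ} (hα : IsIntegral ℤ α) (hε : 0 < ε)
    (hε1 : ε ≤ 1) :
    ∃ m : ℕ, ∃ ω > 0, ∀ (r : Fin m → ℕ) (x : Fin m → ℚ) (L : ℝ), IsAdmissible ω L r x →
      (∀ j, r j * Real.log (x j).den ≤ (1 + ε / 16) * L) →
      ∃ j, ((x j).den : ℝ) ^ (-(2 + ε)) < |α - x j| := by
  obtain ⟨d, B, hB, aux⟩ := exists_hasIndexGE hα
  obtain ⟨m, m_pos, hm⟩ := exists_pos_mul_exp_le_half d (by positivity : 0 < ε / 24)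
  obtain ⟨ω, ω_pos, roth⟩ := exists_rothBound m (ε / 24) (by positivity)
  set C := (1 + |α|) * 2 * B
  have B_le_C : B ≤ C := le_mul_of_one_le_left (by positivity) (by linarith [abs_nonneg α])
  obtain ⟨c, c_pos, hc⟩ := exists_pos_mul_lt (lt_min ω_pos (by positivity : 0 < ε / 16))
    (m * Real.log C)
  refine ⟨m, min ω c, lt_min ω_pos c_pos, fun r x L hadm hrx => ?_⟩
  by_contra! hxα
  obtain ⟨P, P_ne_zero, hPr, hPB, index_α⟩ := aux m (ε / 24) m_pos (by positivity) (by linarith)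
    hm r hadm.degree_pos
  have sum_mul_log_le : (∑ j, r j : ℕ) * Real.log C ≤ min ω (ε / 16) * L :=
    calc (∑ j, r j : ℕ) * Real.log C ≤ m * (c * L) * Real.log C :=
          mul_le_mul_of_nonneg_right ((hadm.mono (min_le_right _ _)).sum_degree_le)
            (Real.log_nonneg (hB.trans B_le_C))
      _ = m * Real.log C * c * L := by ring
      _ ≤ min ω (ε / 16) * L := mul_le_mul_of_nonneg_right hc.le hadm.pos.le
  have l1Norm_P : l1Norm P ≤ Real.exp (ω * L) := by
    refine (hPB.trans (pow_le_pow_left₀ (by positivity) B_le_C _)).trans ?_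
    rw [← Real.exp_log (by positivity : 0 < C), ← Real.exp_nat_mul, Real.exp_le_exp]
    exact sum_mul_log_le.trans (mul_le_mul_of_nonneg_right (min_le_left _ _) hadm.pos.le)
  have abs_sub_le (j : Fin m) : |α - x j| ≤ Real.exp (-((2 + ε) * L * (r j : ℝ)⁻¹)) := by
    refine (hxα j).trans ?_
    have L_div_le : L * (r j : ℝ)⁻¹ ≤ Real.log (x j).den := by
      rw [← div_eq_mul_inv, div_le_iff₀' (Nat.cast_pos.2 (hadm.degree_pos j))]
      exact hadm.le_mul_log j
    rw [Real.rpow_def_of_pos (Nat.cast_pos.2 (x j).pos), Real.exp_le_exp]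
    nlinarith
  have index_gap := mul_sub_le_of_hasIndexGE hPr hB hPB (mul_nonneg (by linarith) hadm.pos.le)
    index_α (roth (hadm.mono (min_le_left _ _)) P_ne_zero hPr l1Norm_P) abs_sub_le
  have sum_mul_log_den_le : ∑ j, r j * Real.log (x j).den ≤ m * ((1 + ε / 16) * L) := by
    simpa using Finset.sum_le_card_nsmul Finset.univ _ _ fun j _ => hrx j
  have min_mul_le : min ω (ε / 16) * L ≤ ε / 16 * L :=
    mul_le_mul_of_nonneg_right (min_le_right _ _) hadm.pos.le
  have := mul_lt_mul_of_pos_right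
    (add_lt_two_add_mul_sub (Nat.one_le_cast.2 m_pos) hε hε1) hadm.pos
  linarith

theorem exists_forall_den_le_of_isIntegral {α ε : ℝ} (hα : IsIntegral ℤ α) (hε : 0 < ε)
    (hε1 : ε ≤ 1) :
    ∃ M : ℕ, ∀ x : ℚ, |α - x| ≤ (x.den : ℝ) ^ (-(2 + ε)) → x.den ≤ M := by
  by_contra! unbounded
  obtain ⟨m, ω, ω_pos, exists_lt⟩ := exists_forall_isAdmissible_exists_lt_abs_sub hα hε hε1
  have log_unbounded (T : ℝ) :
      ∃ x ∈ {x : ℚ | |α - x| ≤ (x.den : ℝ) ^ (-(2 + ε))}, T ≤ Real.log x.den := by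
    obtain ⟨x, hx, den_gt⟩ := unbounded ⌈Real.exp T⌉₊
    exact ⟨x, hx, (Real.le_log_iff_exp_le (Nat.cast_pos.2 x.pos)).2 (Nat.lt_of_ceil_lt den_gt).le⟩
  obtain ⟨r, x, L, hadm, hx, hrx⟩ := exists_isAdmissible log_unbounded m ω_pos
    (by positivity : 0 < ε / 16) (by linarith)
  obtain ⟨j, hj⟩ := exists_lt r x L hadm hrx
  exact hj.not_ge (hx j)

theorem exists_forall_mul_rpow_le_abs_sub_of_isIntegral {α ε : ℝ} (hα : IsIntegral ℤ α)
    (hirr : Irrational α) (hε : 0 < ε) :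
    ∃ K > 0, ∀ x : ℚ, K * (x.den : ℝ) ^ (-(2 + ε)) ≤ |α - x| := by
  obtain ⟨M, hM⟩ := exists_forall_den_le_of_isIntegral hα (lt_min hε one_pos) (min_le_right ε 1)
  obtain ⟨K, hK, K_pos, K_le_one⟩ :=
    (((hirr.eventually_forall_le_dist_cast_rat_of_den_le M).filter_mono nhdsWithin_le_nhds).and
      (Ioc_mem_nhdsGT one_pos)).exists
  refine ⟨K, K_pos, fun x => ?_⟩
  have one_le_den : 1 ≤ (x.den : ℝ) := Nat.one_le_cast.2 x.pos
  rcases le_or_gt x.den M with den_le | den_gt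
  · exact (mul_le_of_le_one_right K_pos.le
      (Real.rpow_le_one_of_one_le_of_nonpos one_le_den (by linarith))).trans (hK x den_le)
  · calc K * (x.den : ℝ) ^ (-(2 + ε)) ≤ (x.den : ℝ) ^ (-(2 + ε)) :=
          mul_le_of_le_one_left (by positivity) K_le_one
      _ ≤ (x.den : ℝ) ^ (-(2 + min ε 1)) :=
          Real.rpow_le_rpow_of_exponent_le one_le_den (by linarith [min_le_left ε 1])
      _ ≤ |α - x| := (not_le.1 fun hx => (hM x hx).not_gt den_gt).le

theorem exists_forall_mul_rpow_le_abs_sub {α ε : ℝ} (halg : IsAlgebraic ℚ α)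
    (hirr : Irrational α) (hε : 0 < ε) :
    ∃ K > 0, ∀ x : ℚ, K * (x.den : ℝ) ^ (-(2 + ε)) ≤ |α - x| := by
  obtain ⟨N, N_ne_zero, hint⟩ :=
    ((IsFractionRing.isAlgebraic_iff ℤ ℚ ℝ).2 halg).exists_integral_multiple
  rw [zsmul_eq_mul] at hint
  obtain ⟨K, K_pos, hK⟩ :=
    exists_forall_mul_rpow_le_abs_sub_of_isIntegral hint (hirr.intCast_mul N_ne_zero) hε
  have N_pos : 0 < |(N : ℝ)| := abs_pos.2 (Int.cast_ne_zero.2 N_ne_zero)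
  refine ⟨K / |(N : ℝ)|, div_pos K_pos N_pos, fun x => ?_⟩
  have den_le : (N * x).den ≤ x.den :=
    Nat.le_of_dvd x.pos (by simpa using Rat.mul_den_dvd N x)
  rw [div_mul_eq_mul_div, div_le_iff₀' N_pos]
  calc K * (x.den : ℝ) ^ (-(2 + ε)) ≤ K * ((N * x).den : ℝ) ^ (-(2 + ε)) :=
        mul_le_mul_of_nonneg_left (Real.rpow_le_rpow_of_nonpos (Nat.cast_pos.2 (N * x).pos)
          (Nat.cast_le.2 den_le) (by linarith)) K_pos.le
    _ ≤ |N * α - (N * x : ℚ)| := hK _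
    _ = |(N : ℝ)| * |α - x| := by rw [← abs_mul, mul_sub]; push_cast; rfl

/-- **Roth's theorem**. -/
theorem exists_forall_div_rpow_le_abs_sub_div {α ε : ℝ} (halg : IsAlgebraic ℚ α)
    (hirr : Irrational α) (hε : 0 < ε) :
    ∃ K > 0, ∀ (p : ℤ) (q : ℕ), 0 < q → K / (q : ℝ) ^ (2 + ε) ≤ |α - p / q| := by
  obtain ⟨K, K_pos, hK⟩ := exists_forall_mul_rpow_le_abs_sub halg hirr hε
  refine ⟨K, K_pos, fun p q hq => ?_⟩
  have den_le : (p / q : ℚ).den ≤ q := Nat.le_of_dvd hq (by exact_mod_cast Rat.den_dvd p q)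
  calc K / (q : ℝ) ^ (2 + ε) = K * (q : ℝ) ^ (-(2 + ε)) := by
        rw [Real.rpow_neg (Nat.cast_nonneg q), div_eq_mul_inv]
    _ ≤ K * ((p / q : ℚ).den : ℝ) ^ (-(2 + ε)) :=
        mul_le_mul_of_nonneg_left (Real.rpow_le_rpow_of_nonpos (Nat.cast_pos.2 (p / q : ℚ).pos)
          (Nat.cast_le.2 den_le) (by linarith)) K_pos.le
    _ ≤ |α - p / q| := by exact_mod_cast hK (p / q)

end RothTheorem

end

/-- Roth's theorem implies that the partial quotients of an algebraic irrational
grow slower than any power of the denominators: b_{n+1} ≤ C_ε · q_n^ε. -/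
theorem partial_quotients_subpolynomial_of_algebraic (a : ℝ)
    (hirr : Irrational a) (halg : IsAlgebraic ℚ a)
    (p : ℕ → ℤ) (q b : ℕ → ℕ)
    (hq : ∀ n, 0 < q n) (hb : ∀ n, 0 < b n)
    (hconv : ∀ n, |a - (p n : ℝ) / (q n : ℝ)| < 1 / ((q n : ℝ) * (q (n + 1) : ℝ)))
    (hqb : ∀ n, b (n + 1) * q n ≤ q (n + 1)) :
    ∀ ε > (0 : ℝ), ∃ C > (0 : ℝ), ∀ n, (b (n + 1) : ℝ) ≤ C * (q n : ℝ) ^ ε := by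
  intro ε hε
  obtain ⟨K, K_pos, roth⟩ := exists_forall_div_rpow_le_abs_sub_div halg hirr hε
  refine ⟨K⁻¹, inv_pos.2 K_pos, fun n => ?_⟩
  have q_pos (k : ℕ) : 0 < (q k : ℝ) := Nat.cast_pos.2 (hq k)
  have growth : (b (n + 1) : ℝ) * q n ≤ q (n + 1) := by exact_mod_cast hqb n
  have bound : K * (q n * q (n + 1)) ≤ (q n : ℝ) ^ (2 + ε) :=
    (div_le_div_iff₀ (Real.rpow_pos_of_pos (q_pos n) _)
      (mul_pos (q_pos n) (q_pos (n + 1)))).1 ((roth (p n) (q n) (hq n)).trans (hconv n).le)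
      |>.trans_eq (one_mul _)
  rw [add_comm 2 ε, Real.rpow_add (q_pos n), Real.rpow_two] at bound
  rw [le_inv_mul_iff₀ K_pos]
  refine le_of_mul_le_mul_right ?_ (pow_pos (q_pos n) 2)
  calc K * b (n + 1) * (q n : ℝ) ^ 2 = K * (q n * (b (n + 1) * q n)) := by ring
    _ ≤ K * (q n * q (n + 1)) := by gcongr
    _ ≤ (q n : ℝ) ^ ε * (q n : ℝ) ^ 2 := bound
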